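/- (Splitting of Palais–Smale sequences.) Assume N ≥ 2, 0 < α < N and p > (N+α)/N. Let {u_n} ⊂ E_λ be a (PS)_c sequence for J_λ. Then, after passing to a subsequence, there exists u ∈ E_λ with u_n → u pointwise on G such that: (i) lim_{n→∞} J_λ(u_n − u) = c − J_λ(u); and (ii) ‖J'_λ(u_n − u)‖_{E_λ*} → 0 as n → ∞, i.e. {u_n − u} is a (PS)_{c−J_λ(u)} sequence for J_λ. -/

import Mathlib

open scoped BigOperators ENNReal
open Filter

noncomputable section

namespace Choquard

variable {G : Type*}

/-- The word metric on a group with generating set `S`. -/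
def wordDist [Group G] (S : Finset G) (x y : G) : ℕ :=
  sInf {k : ℕ | ∃ l : List G, (∀ g ∈ l, g ∈ S) ∧ l.length = k ∧ x⁻¹ * y = l.prod}

/-- The closed ball of radius `r` about `c` in the word metric. -/
def ball [Group G] (S : Finset G) (c : G) (r : ℝ) : Set G :=
  {x | (wordDist S x c : ℝ) ≤ r}

/-- Polynomial growth of homogeneous dimension `N`. -/
def PolyGrowth [Group G] (S : Finset G) (N : ℕ) : Prop :=
  ∃ C₁ C₂ : ℝ, 0 < C₁ ∧ 0 < C₂ ∧ ∀ r : ℝ, 1 ≤ r →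
    C₁ * r ^ N ≤ ((ball S (1 : G) r).ncard : ℝ) ∧
    ((ball S (1 : G) r).ncard : ℝ) ≤ C₂ * r ^ N

/-- Riesz-type asymptotics for the kernel `R`. -/
def RieszKernel [Group G] (S : Finset G) (N : ℕ) (α : ℝ) (R : G → G → ℝ) : Prop :=
  (∀ x y, 0 < R x y) ∧
  ∃ c₁ c₂ : ℝ, 0 < c₁ ∧ 0 < c₂ ∧ ∀ x y : G, x ≠ y →
    c₁ * (wordDist S x y : ℝ) ^ (α - (N : ℝ)) ≤ R x y ∧
    R x y ≤ c₂ * (wordDist S x y : ℝ) ^ (α - (N : ℝ))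

/-- Convolution `(R ∗ f)(x) = Σ_{y ≠ x} R x y f y`. -/
def conv [DecidableEq G] (R : G → G → ℝ) (f : G → ℝ) (x : G) : ℝ :=
  ∑' y, if y = x then 0 else R x y * f y

/-- The convolution as an extended-nonnegative-real valued sum. -/
def convE [DecidableEq G] (R : G → G → ℝ) (f : G → ℝ) (x : G) : ℝ≥0∞ :=
  ∑' y, if y = x then 0 else ENNReal.ofReal (R x y * f y)

/-- Membership in `ℓ^q(G)`. -/
def Memlp (q : ℝ) (u : G → ℝ) : Prop := Summable fun x => |u x| ^ q

/-- The `ℓ^q` norm. -/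
def lpNorm (q : ℝ) (u : G → ℝ) : ℝ := (∑' x, |u x| ^ q) ^ (1 / q)

/-- The `ℓ^∞` norm. -/
def supNorm (u : G → ℝ) : ℝ := ⨆ x, |u x|

/-- The graph Laplacian `Δu(x) = Σ_{s ∈ S} (u(xs) - u(x))`. -/
def lap [Group G] (S : Finset G) (u : G → ℝ) (x : G) : ℝ :=
  ∑ s ∈ S, (u (x * s) - u x)

/-- The gradient form `∇u∇v(x) = (1/2) Σ_{s ∈ S} (u(xs)-u(x))(v(xs)-v(x))`. -/
def grad [Group G] (S : Finset G) (u v : G → ℝ) (x : G) : ℝ :=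
  (1 / 2) * ∑ s ∈ S, (u (x * s) - u x) * (v (x * s) - v x)

/-- The density `|Δu|² + |∇u|² + (1 + λa)u²`. -/
def eDensity [Group G] (S : Finset G) (a : G → ℝ) (lam : ℝ) (u : G → ℝ) (x : G) : ℝ :=
  (lap S u x) ^ 2 + grad S u u x + (1 + lam * a x) * (u x) ^ 2

/-- Membership in the space `E_λ`. -/
def MemE [Group G] (S : Finset G) (a : G → ℝ) (lam : ℝ) (u : G → ℝ) : Prop :=
  Summable (eDensity S a lam u)

/-- `‖u‖²_{E_λ}`. -/
def normEsq [Group G] (S : Finset G) (a : G → ℝ) (lam : ℝ) (u : G → ℝ) : ℝ :=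
  ∑' x, eDensity S a lam u x

/-- `‖u‖_{E_λ}`. -/
def normE [Group G] (S : Finset G) (a : G → ℝ) (lam : ℝ) (u : G → ℝ) : ℝ :=
  Real.sqrt (normEsq S a lam u)

/-- The inner product `⟨u, v⟩_{E_λ}`. -/
def innerE [Group G] (S : Finset G) (a : G → ℝ) (lam : ℝ) (u v : G → ℝ) : ℝ :=
  ∑' x, (lap S u x * lap S v x + grad S u v x + (1 + lam * a x) * (u x * v x))

/-- The nonlocal term `Σ_G (R_α ∗ |u|^p)|u|^p`. -/
def Dterm [DecidableEq G] (R : G → G → ℝ) (p : ℝ) (u : G → ℝ) : ℝ :=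
  ∑' x, conv R (fun y => |u y| ^ p) x * |u x| ^ p

/-- The nonlocal pairing `Σ_G (R_α ∗ |u|^p)|u|^{p-2} u v`. -/
def Kterm [DecidableEq G] (R : G → G → ℝ) (p : ℝ) (u v : G → ℝ) : ℝ :=
  ∑' x, conv R (fun y => |u y| ^ p) x * (|u x| ^ (p - 2) * u x * v x)

/-- The energy functional `J_λ`. -/
def Jfun [Group G] [DecidableEq G] (S : Finset G) (a : G → ℝ) (lam : ℝ)
    (R : G → G → ℝ) (p : ℝ) (u : G → ℝ) : ℝ :=
  (1 / 2) * normEsq S a lam u - (1 / (2 * p)) * Dterm R p u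

/-- The derivative pairing `(J'_λ(u), v)`. -/
def Jd [Group G] [DecidableEq G] (S : Finset G) (a : G → ℝ) (lam : ℝ)
    (R : G → G → ℝ) (p : ℝ) (u v : G → ℝ) : ℝ :=
  innerE S a lam u v - Kterm R p u v

/-- The Nehari manifold `N_λ`. -/
def nehari [Group G] [DecidableEq G] (S : Finset G) (a : G → ℝ) (lam : ℝ)
    (R : G → G → ℝ) (p : ℝ) : Set (G → ℝ) :=
  {u | MemE S a lam u ∧ u ≠ 0 ∧ Jd S a lam R p u u = 0}

/-- `m_λ = inf_{N_λ} J_λ`. -/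
def mlam [Group G] [DecidableEq G] (S : Finset G) (a : G → ℝ) (lam : ℝ)
    (R : G → G → ℝ) (p : ℝ) : ℝ :=
  sInf (Jfun S a lam R p '' nehari S a lam R p)

/-- The norm of `J'_λ(u)` in the dual space `E_λ*`. -/
def dualNorm [Group G] [DecidableEq G] (S : Finset G) (a : G → ℝ) (lam : ℝ)
    (R : G → G → ℝ) (p : ℝ) (u : G → ℝ) : ℝ :=
  sSup {t : ℝ | ∃ v, MemE S a lam v ∧ normEsq S a lam v ≤ 1 ∧ t = |Jd S a lam R p u v|}

/-- `(PS)_c` sequence for `J_λ`. -/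
def PSseq [Group G] [DecidableEq G] (S : Finset G) (a : G → ℝ) (lam : ℝ)
    (R : G → G → ℝ) (p : ℝ) (c : ℝ) (U : ℕ → G → ℝ) : Prop :=
  (∀ n, MemE S a lam (U n)) ∧
  Tendsto (fun n => Jfun S a lam R p (U n)) atTop (nhds c) ∧
  Tendsto (fun n => dualNorm S a lam R p (U n)) atTop (nhds 0)

/-- The Cayley graph of `(G, S)`. -/
def cayley [Group G] (S : Finset G) : SimpleGraph G :=
  SimpleGraph.fromRel (fun x y => x⁻¹ * y ∈ S)

/-- Condition (A₁): the potential well `Ω = {a = 0}` is nonempty, finite and connected. -/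
def CondA1 [Group G] (S : Finset G) (a : G → ℝ) : Prop :=
  {x | a x = 0}.Nonempty ∧ {x | a x = 0}.Finite ∧
  ((cayley S).induce {x | a x = 0}).Connected

/-- Condition (A₂): some sublevel set `{a ≤ M}` is finite and nonempty. -/
def CondA2 (a : G → ℝ) : Prop :=
  ∃ M : ℝ, 0 < M ∧ {x | a x ≤ M}.Finite ∧ {x | a x ≤ M}.Nonempty

/-- The density `|Δu|² + |∇u|² + u²` of the `W^{2,2}` norm. -/
def wDensity [Group G] (S : Finset G) (u : G → ℝ) (x : G) : ℝ :=
  (lap S u x) ^ 2 + grad S u u x + (u x) ^ 2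

/-- Membership in `W^{2,2}(G)`. -/
def MemW [Group G] (S : Finset G) (u : G → ℝ) : Prop := Summable (wDensity S u)

/-- `‖u‖²_{W^{2,2}}`. -/
def normWsq [Group G] (S : Finset G) (u : G → ℝ) : ℝ := ∑' x, wDensity S u x

/-- Membership in `E(Ω)`: vanishing outside `Ω`. -/
def MemEOm (Ω : Set G) (u : G → ℝ) : Prop := ∀ x ∉ Ω, u x = 0

/-- `‖u‖²_{E(Ω)}`. -/
def normOmSq [Group G] (S : Finset G) (Ω : Set G) (u : G → ℝ) : ℝ :=
  (∑' x, ((lap S u x) ^ 2 + grad S u u x)) + ∑' x : Ω, (u (x : G)) ^ 2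

/-- The nonlocal term over `Ω`. -/
def DtermOm [DecidableEq G] (Ω : Set G) (R : G → G → ℝ) (p : ℝ) (u : G → ℝ) : ℝ :=
  ∑' x : Ω, conv R (fun y => |u y| ^ p) (x : G) * |u (x : G)| ^ p

/-- The limiting energy functional `J_Ω`. -/
def JOm [Group G] [DecidableEq G] (S : Finset G) (Ω : Set G) (R : G → G → ℝ) (p : ℝ)
    (u : G → ℝ) : ℝ :=
  (1 / 2) * normOmSq S Ω u - (1 / (2 * p)) * DtermOm Ω R p u

/-- The derivative pairing `(J'_Ω(u), v)`. -/
def JdOm [Group G] [DecidableEq G] (S : Finset G) (Ω : Set G) (R : G → G → ℝ) (p : ℝ)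
    (u v : G → ℝ) : ℝ :=
  (∑' x, (lap S u x * lap S v x + grad S u v x)) + (∑' x : Ω, u (x : G) * v (x : G))
    - ∑' x : Ω, conv R (fun y => |u y| ^ p) (x : G) * (|u (x : G)| ^ (p - 2) * u (x : G) * v (x : G))

/-- The Nehari manifold `N_Ω`. -/
def nehariOm [Group G] [DecidableEq G] (S : Finset G) (Ω : Set G) (R : G → G → ℝ)
    (p : ℝ) : Set (G → ℝ) :=
  {u | MemEOm Ω u ∧ u ≠ 0 ∧ JdOm S Ω R p u u = 0}

/-- `m_Ω = inf_{N_Ω} J_Ω`. -/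
def mOm [Group G] [DecidableEq G] (S : Finset G) (Ω : Set G) (R : G → G → ℝ) (p : ℝ) : ℝ :=
  sInf (JOm S Ω R p '' nehariOm S Ω R p)

/-!
On a countable set, a pointwise null family that is uniformly tight in `ℓ¹` has sums tending to
zero. Write the nonlocal term as a sum over `G × G` and a Palais–Smale sequence, along a
subsequence, as `u + w n` with `w n → 0` pointwise. The density of the Brezis–Lieb remainder is, up
to an arbitrarily small multiple of an `ℓ¹`-bounded family, dominated by densities that contain a
factor of the fixed function `u`. Since `u ^ 2` is summable, Young's inequality, read as an
interpolation between `ℓ¹` families, makes these tight. The test functions need only be bounded in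
`E_λ`, so one may test `J'_λ` along a near-maximizing sequence, which gives convergence in the dual
norm.
-/

section Families

variable {ι κ α β : Type*}

/-- The functions `f i` are bounded in `ℓ¹` uniformly in `i`. Sums over finite sets spare a separate
summability condition. -/
def L1Bounded (f : ι → β → ℝ) : Prop :=
  ∃ C, ∀ i (s : Finset β), ∑ x ∈ s, |f i x| ≤ C

/-- The functions `f i` are uniformly tight in `ℓ¹`: up to `ε`, a single finite set carries the
mass of all of them. -/
def L1Tight (f : ι → β → ℝ) : Prop :=
  ∀ ε > 0, ∃ P : Finset β, ∀ i (s : Finset β), Disjoint s P → ∑ x ∈ s, |f i x| ≤ ε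

/-- `L1Bounded` for the squares: a family bounded in `ℓ²`. -/
abbrev L2Bounded (u : ι → β → ℝ) : Prop := L1Bounded fun i x => u i x ^ 2

/-- `L1Tight` for the squares: a family that is uniformly tight in `ℓ²`. -/
abbrev L2Tight (u : ι → β → ℝ) : Prop := L1Tight fun i x => u i x ^ 2

lemma summable_of_sum_abs_le {f : β → ℝ} {C : ℝ} (h : ∀ s : Finset β, ∑ x ∈ s, |f x| ≤ C) :
    Summable f :=
  (summable_of_sum_le (fun _ => abs_nonneg _) h).of_abs

lemma abs_tsum_le_of_sum_abs_le {f : β → ℝ} {C : ℝ} (h : ∀ s : Finset β, ∑ x ∈ s, |f x| ≤ C) :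
    |∑' x, f x| ≤ C :=
  (norm_tsum_le_tsum_norm (summable_of_sum_abs_le h).norm).trans
    ((summable_of_sum_abs_le h).norm.tsum_le_of_sum_le h)

lemma sum_abs_fiber_le {g : α → ℝ} {k : α → β → ℝ} {C : ℝ}
    (hk : ∀ a (s : Finset β), ∑ y ∈ s, |k a y| ≤ C) [DecidableEq α] (s : Finset (α × β)) :
    ∑ z ∈ s, |g z.1 * k z.1 z.2| ≤ C * ∑ a ∈ s.image Prod.fst, |g a| := by
  classical
  calc ∑ z ∈ s, |g z.1 * k z.1 z.2|
      ≤ ∑ z ∈ s.image Prod.fst ×ˢ s.image Prod.snd, |g z.1 * k z.1 z.2| :=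
        Finset.sum_le_sum_of_subset_of_nonneg Finset.subset_product fun _ _ _ => abs_nonneg _
    _ = ∑ a ∈ s.image Prod.fst, |g a| * ∑ y ∈ s.image Prod.snd, |k a y| := by
        simp only [Finset.sum_product, abs_mul, Finset.mul_sum]
    _ ≤ ∑ a ∈ s.image Prod.fst, |g a| * C := by gcongr with a; exact hk a _
    _ = C * ∑ a ∈ s.image Prod.fst, |g a| := by rw [← Finset.sum_mul, mul_comm]

lemma rpow_mul_rpow_le_mul_add {s : ℝ} (hs0 : 0 < s) (hs1 : s ≤ 1) {η : ℝ} (hη : 0 < η) {a b : ℝ}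
    (ha : 0 ≤ a) (hb : 0 ≤ b) :
    a ^ (1 - s) * b ^ s ≤ η * a + η ^ (-((1 - s) / s)) * b := by
  set θ := η ^ (-((1 - s) / s)) with hθ
  have hθ0 : 0 < θ := by positivity
  have hηθ : η ^ (1 - s) * θ ^ s = 1 := by
    rw [hθ, ← Real.rpow_mul hη.le, ← Real.rpow_add hη]
    have : 1 - s + -((1 - s) / s) * s = 0 := by field_simp; ring
    rw [this, Real.rpow_zero]
  calc a ^ (1 - s) * b ^ s = (η * a) ^ (1 - s) * (θ * b) ^ s := by
        rw [Real.mul_rpow hη.le ha, Real.mul_rpow hθ0.le hb, mul_mul_mul_comm, hηθ, one_mul]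
    _ ≤ (1 - s) * (η * a) + s * (θ * b) :=
        Real.geom_mean_le_arith_mean2_weighted (by linarith) hs0.le (by positivity) (by positivity)
          (by ring)
    _ ≤ η * a + θ * b := by
        exact add_le_add (mul_le_of_le_one_left (by positivity) (by linarith))
          (mul_le_of_le_one_left (by positivity) hs1)

namespace L1Bounded

variable {f g : ι → β → ℝ}

lemma mono (hg : L1Bounded g) (h : ∀ i x, |f i x| ≤ |g i x|) : L1Bounded f :=
  hg.imp fun _ hC i s => (Finset.sum_le_sum fun x _ => h i x).trans (hC i s)

lemma add (hf : L1Bounded f) (hg : L1Bounded g) : L1Bounded fun i x => f i x + g i x := by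
  obtain ⟨C, hC⟩ := hf
  obtain ⟨D, hD⟩ := hg
  refine ⟨C + D, fun i s => ?_⟩
  calc ∑ x ∈ s, |f i x + g i x| ≤ ∑ x ∈ s, (|f i x| + |g i x|) := by
        gcongr with x; exact abs_add_le _ _
    _ ≤ C + D := by rw [Finset.sum_add_distrib]; exact add_le_add (hC i s) (hD i s)

lemma const_mul (c : ℝ) (hf : L1Bounded f) : L1Bounded fun i x => c * f i x := by
  obtain ⟨C, hC⟩ := hf
  refine ⟨|c| * C, fun i s => ?_⟩
  simp only [abs_mul, ← Finset.mul_sum]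
  gcongr
  exact hC i s

lemma comp (hf : L1Bounded f) (e : κ → ι) : L1Bounded fun i x => f (e i) x :=
  hf.imp fun _ hC i s => hC (e i) s

lemma comp_injective (hf : L1Bounded f) {e : ι → α → β} (he : ∀ i, (e i).Injective) :
    L1Bounded fun i x => f i (e i x) := by
  obtain ⟨C, hC⟩ := hf
  refine ⟨C, fun i s => ?_⟩
  have := hC i (s.map ⟨e i, he i⟩)
  rwa [Finset.sum_map] at this

lemma of_summable {g : β → ℝ} (hg : Summable g) : L1Bounded fun (_ : ι) => g :=
  ⟨_, fun _ s => hg.abs.sum_le_tsum s fun _ _ => abs_nonneg _⟩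

lemma summable (hf : L1Bounded f) (i : ι) : Summable (f i) :=
  let ⟨_, hC⟩ := hf
  summable_of_sum_abs_le (hC i)

lemma summable_of_tendsto {l : Filter ι} [l.NeBot] {g : β → ℝ} (hf : L1Bounded f)
    (h : ∀ x, Tendsto (fun i => f i x) l (nhds (g x))) : Summable g :=
  let ⟨_, hC⟩ := hf
  summable_of_sum_abs_le fun s =>
    le_of_tendsto' (tendsto_finsetSum s fun x _ => (h x).abs) fun i => hC i s

lemma exists_abs_tsum_le (hf : L1Bounded f) : ∃ C, ∀ i, |∑' x, f i x| ≤ C :=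
  hf.imp fun _ hC i => abs_tsum_le_of_sum_abs_le (hC i)

lemma exists_abs_le (hf : L1Bounded f) : ∃ C, ∀ i x, |f i x| ≤ C :=
  hf.imp fun _ hC i x => by simpa using hC i {x}

lemma rpow_mul_rpow (hf : L1Bounded f) (hg : L1Bounded g) {s : ℝ} (hs0 : 0 < s) (hs1 : s ≤ 1) :
    L1Bounded fun i x => |f i x| ^ (1 - s) * |g i x| ^ s := by
  obtain ⟨C, hC⟩ := hf
  obtain ⟨D, hD⟩ := hg
  refine ⟨C + D, fun i t => ?_⟩
  calc ∑ x ∈ t, |(|f i x| ^ (1 - s) * |g i x| ^ s)| ≤ ∑ x ∈ t, (|f i x| + |g i x|) := by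
        gcongr with x
        rw [abs_of_nonneg (by positivity)]
        simpa using rpow_mul_rpow_le_mul_add hs0 hs1 one_pos (abs_nonneg (f i x))
          (abs_nonneg (g i x))
    _ ≤ C + D := by rw [Finset.sum_add_distrib]; exact add_le_add (hC i t) (hD i t)

lemma sqrt_mul (hf : L1Bounded f) (hg : L1Bounded g) :
    L1Bounded fun i x => √(|f i x| * |g i x|) := by
  refine (hf.rpow_mul_rpow hg (s := 1 / 2) (by norm_num) (by norm_num)).mono fun i x => le_of_eq ?_
  rw [Real.sqrt_eq_rpow, Real.mul_rpow (abs_nonneg _) (abs_nonneg _), sub_half]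

lemma exists_rpow_le_mul (hf : L1Bounded f) {t : ℝ} (ht : 1 ≤ t) :
    ∃ C, ∀ i x, |f i x| ^ t ≤ C * |f i x| := by
  obtain ⟨C, hC⟩ := hf.exists_abs_le
  refine ⟨C ^ (t - 1), fun i x => ?_⟩
  calc |f i x| ^ t = |f i x| ^ (t - 1) * |f i x| := by
        conv_rhs => enter [2]; rw [← Real.rpow_one |f i x|]
        rw [← Real.rpow_add_of_nonneg (abs_nonneg _) (by linarith) zero_le_one, sub_add_cancel]
    _ ≤ C ^ (t - 1) * |f i x| := by gcongr; exact hC i x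

lemma rpow (hf : L1Bounded f) {t : ℝ} (ht : 1 ≤ t) : L1Bounded fun i x => |f i x| ^ t := by
  obtain ⟨C, hC⟩ := hf.exists_rpow_le_mul ht
  refine (hf.const_mul C).mono fun i x => ?_
  rw [abs_of_nonneg (by positivity)]
  refine (hC i x).trans ?_
  rw [abs_mul]
  gcongr
  exact le_abs_self C

lemma fiber {g : ι → α → ℝ} {k : ι → α → β → ℝ} (hg : L1Bounded g)
    (hk : L1Bounded fun j : ι × α => k j.1 j.2) :
    L1Bounded fun i (z : α × β) => g i z.1 * k i z.1 z.2 := by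
  classical
  obtain ⟨C, hC⟩ := hg
  obtain ⟨D, hD⟩ := hk
  refine ⟨|D| * C, fun i s => ?_⟩
  calc ∑ z ∈ s, |g i z.1 * k i z.1 z.2| ≤ |D| * ∑ a ∈ s.image Prod.fst, |g i a| :=
        sum_abs_fiber_le (fun a t => (hD (i, a) t).trans (le_abs_self D)) s
    _ ≤ |D| * C := by gcongr; exact hC i _

end L1Bounded

lemma L2Bounded.add {u w : ι → β → ℝ} (hu : L2Bounded u) (hw : L2Bounded w) :
    L2Bounded (u + w) := by
  refine ((L1Bounded.add hu hw).const_mul 2).mono fun i x => ?_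
  rw [abs_of_nonneg (sq_nonneg _), abs_of_nonneg (by positivity)]
  exact add_sq_le

namespace L1Tight

variable {f g : ι → β → ℝ}

lemma mono (hg : L1Tight g) (h : ∀ i x, |f i x| ≤ |g i x|) : L1Tight f := fun ε hε =>
  (hg ε hε).imp fun _ hP i s hs => (Finset.sum_le_sum fun x _ => h i x).trans (hP i s hs)

lemma of_forall_le {b : ι → β → ℝ} (hb : L1Bounded b) (hg : L1Tight g)
    (h : ∀ η > 0, ∃ C, ∀ i x, |f i x| ≤ η * |b i x| + C * |g i x|) : L1Tight f := by
  intro ε hε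
  obtain ⟨B, hB⟩ := hb
  obtain ⟨C, hC⟩ := h (ε / (2 * (|B| + 1))) (by positivity)
  obtain ⟨P, hP⟩ := hg (ε / (2 * (|C| + 1))) (by positivity)
  refine ⟨P, fun i s hs => ?_⟩
  calc ∑ x ∈ s, |f i x|
      ≤ ∑ x ∈ s, (ε / (2 * (|B| + 1)) * |b i x| + (|C| + 1) * |g i x|) := by
        refine Finset.sum_le_sum fun x _ => (hC i x).trans ?_
        gcongr
        linarith [le_abs_self C]
    _ = ε / (2 * (|B| + 1)) * ∑ x ∈ s, |b i x| + (|C| + 1) * ∑ x ∈ s, |g i x| := by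
        rw [Finset.sum_add_distrib, Finset.mul_sum, Finset.mul_sum]
    _ ≤ ε / (2 * (|B| + 1)) * (|B| + 1) + (|C| + 1) * (ε / (2 * (|C| + 1))) := by
        gcongr
        · linarith [hB i s, le_abs_self B]
        · exact hP i s hs
    _ = ε := by field_simp; ring

lemma add (hf : L1Tight f) (hg : L1Tight g) : L1Tight fun i x => f i x + g i x := by
  classical
  intro ε hε
  obtain ⟨P, hP⟩ := hf (ε / 2) (half_pos hε)
  obtain ⟨Q, hQ⟩ := hg (ε / 2) (half_pos hε)
  refine ⟨P ∪ Q, fun i s hs => ?_⟩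
  rw [Finset.disjoint_union_right] at hs
  calc ∑ x ∈ s, |f i x + g i x| ≤ ∑ x ∈ s, (|f i x| + |g i x|) := by
        gcongr with x; exact abs_add_le _ _
    _ ≤ ε / 2 + ε / 2 := by
        rw [Finset.sum_add_distrib]; exact add_le_add (hP i s hs.1) (hQ i s hs.2)
    _ = ε := add_halves ε

lemma comp_equiv (hf : L1Tight f) (e : α ≃ β) : L1Tight fun i x => f i (e x) := by
  intro ε hε
  obtain ⟨P, hP⟩ := hf ε hε
  refine ⟨P.map e.symm.toEmbedding, fun i s hs => ?_⟩
  have := hP i (s.map e.toEmbedding) (by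
    rw [← Finset.disjoint_map e.symm.toEmbedding, Finset.map_map]
    simpa using hs)
  rwa [Finset.sum_map] at this

lemma of_summable {g : β → ℝ} (hg : Summable g) : L1Tight fun (_ : ι) => g := by
  intro ε hε
  obtain ⟨P, hP⟩ := summable_iff_vanishing_norm.1 hg.abs ε hε
  refine ⟨P, fun _ s hs => ?_⟩
  exact ((le_abs_self _).trans_lt (hP s hs)).le

lemma rpow_mul_rpow (hf : L1Bounded f) (hg : L1Tight g) {s : ℝ} (hs0 : 0 < s) (hs1 : s ≤ 1) :
    L1Tight fun i x => |f i x| ^ (1 - s) * |g i x| ^ s :=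
  of_forall_le hf hg fun η hη => ⟨_, fun i x => by
    rw [abs_of_nonneg (by positivity)]
    exact rpow_mul_rpow_le_mul_add hs0 hs1 hη (abs_nonneg _) (abs_nonneg _)⟩

lemma rpow_mul_rpow_left (hf : L1Tight f) (hg : L1Bounded g) {s : ℝ} (hs0 : 0 ≤ s) (hs1 : s < 1) :
    L1Tight fun i x => |f i x| ^ (1 - s) * |g i x| ^ s := by
  simpa only [sub_sub_cancel, mul_comm] using
    rpow_mul_rpow hg hf (s := 1 - s) (by linarith) (by linarith)

lemma sqrt_mul (hf : L1Bounded f) (hg : L1Bounded g) (ht : L1Tight f ∨ L1Tight g) :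
    L1Tight fun i x => √(|f i x| * |g i x|) := by
  suffices L1Tight fun i x => |f i x| ^ (1 - 1 / 2 : ℝ) * |g i x| ^ (1 / 2 : ℝ) by
    simpa only [Real.sqrt_eq_rpow, Real.mul_rpow (abs_nonneg _) (abs_nonneg _), sub_half] using this
  rcases ht with hft | hgt
  · exact hft.rpow_mul_rpow_left hg (by norm_num) (by norm_num)
  · exact rpow_mul_rpow hf hgt (by norm_num) (by norm_num)

lemma rpow (hf : L1Tight f) (hb : L1Bounded f) {t : ℝ} (ht : 1 ≤ t) :
    L1Tight fun i x => |f i x| ^ t := by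
  obtain ⟨C, hC⟩ := hb.exists_rpow_le_mul ht
  refine of_forall_le hb hf fun η hη => ⟨C, fun i x => ?_⟩
  rw [abs_of_nonneg (by positivity)]
  exact (hC i x).trans (le_add_of_nonneg_left (by positivity))

lemma fiber {g : ι → α → ℝ} {k : α → β → ℝ} (hg : L1Tight g) (hb : L1Bounded g)
    (hk : L1Bounded k) : L1Tight fun i (z : α × β) => g i z.1 * k z.1 z.2 := by
  classical
  intro ε hε
  obtain ⟨D, hD⟩ := hk
  obtain ⟨M, hM⟩ := hb.exists_abs_le
  obtain ⟨F, hF⟩ := hg (ε / (2 * (|D| + 1))) (by positivity)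
  have hslices : L1Bounded fun (_ : Unit) (z : α × β) => (if z.1 ∈ F then 1 else 0) * k z.1 z.2 :=
    (L1Bounded.of_summable (g := fun a => if a ∈ F then (1 : ℝ) else 0)
      (summable_of_ne_finset_zero (s := F) fun a ha => if_neg ha)).fiber (k := fun _ => k)
      ⟨D, fun j => hD j.2⟩
  obtain ⟨P, hP⟩ := of_summable (ι := Unit) (hslices.summable ()) (ε / (2 * (|M| + 1)))
    (by positivity)
  refine ⟨P, fun i s hs => ?_⟩
  have hnear : ∑ z ∈ s with z.1 ∈ F, |g i z.1 * k z.1 z.2| ≤ |M| * (ε / (2 * (|M| + 1))) := by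
    refine le_trans ?_ (mul_le_mul_of_nonneg_left (hP () (s.filter fun z => z.1 ∈ F)
      (Finset.disjoint_of_subset_left (Finset.filter_subset _ _) hs)) (abs_nonneg M))
    rw [Finset.mul_sum]
    refine Finset.sum_le_sum fun z hz => ?_
    simp only [abs_mul, if_pos (Finset.mem_filter.1 hz).2, one_mul]
    exact mul_le_mul_of_nonneg_right ((hM i z.1).trans (le_abs_self M)) (abs_nonneg _)
  have hfar : ∑ z ∈ s with z.1 ∉ F, |g i z.1 * k z.1 z.2| ≤ |D| * (ε / (2 * (|D| + 1))) := by
    refine (sum_abs_fiber_le (fun a t => (hD a t).trans (le_abs_self D)) _).trans ?_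
    gcongr
    refine hF i _ (Finset.disjoint_left.2 fun a ha => ?_)
    obtain ⟨z, hz, rfl⟩ := Finset.mem_image.1 ha
    exact (Finset.mem_filter.1 hz).2
  have hle (B : ℝ) : |B| * (ε / (2 * (|B| + 1))) ≤ ε / 2 := by
    rw [mul_div_assoc', div_le_div_iff₀ (by positivity) two_pos]
    nlinarith
  rw [← Finset.sum_filter_add_sum_filter_not s fun z => z.1 ∈ F]
  linarith [hle M, hle D]

lemma tendsto_tsum_zero {l : Filter ι} (hf : L1Tight f)
    (h : ∀ x, Tendsto (fun i => f i x) l (nhds 0)) :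
    Tendsto (fun i => ∑' x, f i x) l (nhds 0) := by
  classical
  rw [Metric.tendsto_nhds]
  intro ε hε
  obtain ⟨P, hP⟩ := hf (ε / 2) (half_pos hε)
  have hsum : Tendsto (fun i => ∑ x ∈ P, |f i x|) l (nhds 0) := by
    simpa using tendsto_finsetSum P fun x _ => (h x).abs
  filter_upwards [hsum.eventually_lt_const (half_pos hε)] with i hi
  have htotal : |∑' x, f i x| ≤ ∑ x ∈ P, |f i x| + ε / 2 := by
    refine abs_tsum_le_of_sum_abs_le fun s => ?_
    calc ∑ x ∈ s, |f i x| ≤ ∑ x ∈ P ∪ (s \ P), |f i x| :=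
          Finset.sum_le_sum_of_subset_of_nonneg (by simp) fun _ _ _ => abs_nonneg _
      _ = ∑ x ∈ P, |f i x| + ∑ x ∈ s \ P, |f i x| := Finset.sum_union Finset.disjoint_sdiff
      _ ≤ ∑ x ∈ P, |f i x| + ε / 2 := by gcongr; exact hP i _ Finset.sdiff_disjoint
  rw [Real.dist_0_eq_abs]
  linarith

end L1Tight

lemma summable_sq_add {u v : β → ℝ} (hu : Summable fun x => u x ^ 2)
    (hv : Summable fun x => v x ^ 2) : Summable fun x => (u + v) x ^ 2 :=
  (L2Bounded.add (u := fun _ : Unit => u) (w := fun _ => v) (.of_summable hu)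
    (.of_summable hv)).summable ()

end Families

section PowerLike

/-- The multiplicative functions `ψ : ℝ → ℝ` with `|ψ t| = |t| ^ q`, that is, `|t| ^ q` and its
signed version; both nonlinearities of the problem are of this kind. -/
structure IsPowerLike (q : ℝ) (ψ : ℝ → ℝ) : Prop where
  map_mul : ∀ s t, ψ (s * t) = ψ s * ψ t
  abs_map : ∀ t, |ψ t| = |t| ^ q
  continuousAt_one : ContinuousAt ψ 1

/-- The odd power `|t| ^ (p - 2) t`, of degree `p - 1`. -/
def signedPow (p t : ℝ) : ℝ := |t| ^ (p - 2) * t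

lemma abs_signedPow {p : ℝ} (hp : 1 < p) (t : ℝ) : |signedPow p t| = |t| ^ (p - 1) := by
  rw [signedPow, abs_mul, abs_of_nonneg (by positivity : 0 ≤ |t| ^ (p - 2))]
  rcases eq_or_ne t 0 with rfl | ht
  · rw [abs_zero, mul_zero, Real.zero_rpow (by linarith)]
  · rw [show p - 1 = p - 2 + 1 by ring, Real.rpow_add_one (abs_pos.2 ht).ne']

lemma signedPow_mul_self {p : ℝ} (hp : 1 < p) (t : ℝ) : signedPow p t * t = |t| ^ p := by
  have hnonneg : 0 ≤ signedPow p t * t := by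
    rw [signedPow, mul_assoc]
    exact mul_nonneg (by positivity) (mul_self_nonneg t)
  rw [← abs_of_nonneg hnonneg, abs_mul, abs_signedPow hp]
  rcases eq_or_ne t 0 with rfl | ht
  · rw [abs_zero, mul_zero, Real.zero_rpow (by linarith)]
  · rw [← Real.rpow_add_one (abs_pos.2 ht).ne', sub_add_cancel]

lemma isPowerLike_abs_rpow (q : ℝ) : IsPowerLike q fun t => |t| ^ q where
  map_mul s t := by rw [abs_mul, Real.mul_rpow (abs_nonneg s) (abs_nonneg t)]
  abs_map t := abs_of_nonneg (by positivity)
  continuousAt_one := continuous_abs.continuousAt.rpow_const (by simp)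

lemma isPowerLike_signedPow {p : ℝ} (hp : 1 < p) : IsPowerLike (p - 1) (signedPow p) where
  map_mul s t := by
    simp only [signedPow, abs_mul, Real.mul_rpow (abs_nonneg s) (abs_nonneg t)]
    ring
  abs_map := abs_signedPow hp
  continuousAt_one :=
    (continuous_abs.continuousAt.rpow_const (by simp)).mul continuousAt_id

namespace IsPowerLike

variable {q : ℝ} {ψ : ℝ → ℝ}

lemma map_one (hψ : IsPowerLike q ψ) : ψ 1 = 1 := by
  have hne : ψ 1 ≠ 0 := by
    rw [← abs_pos, hψ.abs_map]
    simp
  exact mul_left_cancel₀ hne (by rw [← hψ.map_mul, mul_one, mul_one])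

lemma abs_sub_le_of_near {δ η : ℝ} (hψ : IsPowerLike q ψ)
    (hδ : ∀ t, |t - 1| < δ → |ψ t - 1| < η) {a b : ℝ} (hb : b ≠ 0) (hab : |a - b| < δ * |b|) :
    |ψ a - ψ b| ≤ η * |b| ^ q := by
  have hratio : |a / b - 1| < δ := by
    rwa [div_sub_one hb, abs_div, div_lt_iff₀ (abs_pos.2 hb)]
  calc |ψ a - ψ b| = |ψ (a / b) - 1| * |b| ^ q := by
        rw [← hψ.abs_map, ← abs_mul, sub_mul, ← hψ.map_mul, div_mul_cancel₀ a hb, one_mul]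
    _ ≤ η * |b| ^ q := by gcongr; exact (hδ _ hratio).le

lemma abs_sub_le_of_far {δ : ℝ} (hψ : IsPowerLike q ψ) (hq : 0 < q) (hδ : 0 < δ) {a b : ℝ}
    (hab : δ * |b| ≤ |a - b|) : |ψ a - ψ b| ≤ 2 * (1 + 1 / δ) ^ q * |a - b| ^ q := by
  have hb : |b| ≤ 1 / δ * |a - b| := by
    rwa [one_div_mul_eq_div, le_div_iff₀ hδ, mul_comm]
  have ha : |a| ≤ |b| + |a - b| := by
    simpa using abs_add_le b (a - b)
  have hpow {t : ℝ} (ht : |t| ≤ (1 + 1 / δ) * |a - b|) :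
      |ψ t| ≤ (1 + 1 / δ) ^ q * |a - b| ^ q := by
    rw [hψ.abs_map, ← Real.mul_rpow (by positivity) (abs_nonneg _)]
    gcongr
  calc |ψ a - ψ b| ≤ |ψ a| + |ψ b| := abs_sub _ _
    _ ≤ (1 + 1 / δ) ^ q * |a - b| ^ q + (1 + 1 / δ) ^ q * |a - b| ^ q :=
        add_le_add (hpow (by linarith)) (hpow (by linarith [abs_nonneg (a - b)]))
    _ = 2 * (1 + 1 / δ) ^ q * |a - b| ^ q := by ring

lemma exists_abs_sub_le (hψ : IsPowerLike q ψ) (hq : 0 < q) {η : ℝ} (hη : 0 < η) :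
    ∃ C, ∀ a b, |ψ a - ψ b| ≤ η * |b| ^ q + C * |a - b| ^ q := by
  obtain ⟨δ, hδ, hclose⟩ := Metric.continuousAt_iff.1 hψ.continuousAt_one η hη
  simp only [hψ.map_one, Real.dist_eq] at hclose
  refine ⟨2 * (1 + 1 / δ) ^ q, fun a b => ?_⟩
  rcases lt_or_ge |a - b| (δ * |b|) with hnear | hfar
  · have hb : b ≠ 0 := by
      rintro rfl
      simp [(abs_nonneg a).not_gt] at hnear
    exact (hψ.abs_sub_le_of_near (fun t => @hclose t) hb hnear).trans
      (le_add_of_nonneg_right (by positivity))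
  · exact (hψ.abs_sub_le_of_far hq hδ hfar).trans (le_add_of_nonneg_left (by positivity))

lemma continuous (hψ : IsPowerLike q ψ) (hq : 0 < q) : Continuous ψ := by
  refine continuous_iff_continuousAt.2 fun b => Metric.continuousAt_iff'.2 fun ε hε => ?_
  obtain ⟨C, hC⟩ := hψ.exists_abs_sub_le hq (η := ε / (2 * (|b| ^ q + 1))) (by positivity)
  have hcont : ContinuousAt
      (fun a => ε / (2 * (|b| ^ q + 1)) * |b| ^ q + C * |a - b| ^ q) b := by
    have := (continuousAt_id (x := b)).sub_const b |>.abs.rpow_const (p := q) (.inr hq.le)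
    exact (this.const_mul C).const_add _
  have hlt : ε / (2 * (|b| ^ q + 1)) * |b| ^ q + C * |b - b| ^ q < ε := by
    rw [sub_self, abs_zero, Real.zero_rpow hq.ne', mul_zero, add_zero, div_mul_eq_mul_div,
      div_lt_iff₀ (by positivity)]
    nlinarith [(by positivity : 0 ≤ |b| ^ q)]
  filter_upwards [hcont.eventually_lt_const hlt] with a ha
  exact (hC a b).trans_lt ha

end IsPowerLike

end PowerLike

section Kernel

variable {ι α : Type*}

/-- The hypothesis of the discrete Hardy–Littlewood–Sobolev inequality in Young's form: rows and
columns of `Q` are bounded in `ℓ^r`, and `2 - 1 / r ≤ p` puts `|u| ^ p` for `u ∈ ℓ²` into the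
admissible range. -/
structure IsHLSKernel (r p : ℝ) (Q : α → α → ℝ) : Prop where
  one_le : 1 ≤ r
  two_sub_inv_le : 2 - r⁻¹ ≤ p
  nonneg : ∀ x y, 0 ≤ Q x y
  rows : L1Bounded fun x y => Q x y ^ r
  cols : L1Bounded fun y x => Q x y ^ r

/-- This writes Young's three-function inequality as two interpolations between `ℓ¹` families. -/
lemma kernel_mul_rpow_eq {r k : ℝ} (hr : 1 ≤ r) (hk : 0 ≤ k) (a b : ℝ) :
    k * (|a| * |b|) ^ (1 - r⁻¹ / 2) =
      |a * b| ^ (1 - r⁻¹) * |√(|a * k ^ r| * |b * k ^ r|)| ^ r⁻¹ := by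
  have hkr : 0 ≤ k ^ r := Real.rpow_nonneg hk r
  have hsqrt : √(|a * k ^ r| * |b * k ^ r|) = k ^ r * |a * b| ^ (1 / 2 : ℝ) := by
    rw [abs_mul, abs_mul, abs_of_nonneg hkr, mul_mul_mul_comm, ← abs_mul, mul_comm,
      Real.sqrt_mul (mul_self_nonneg _), Real.sqrt_mul_self hkr, Real.sqrt_eq_rpow]
  have hexp : 0 ≤ 1 / 2 * r⁻¹ := by positivity
  rw [← abs_mul, abs_of_nonneg (Real.sqrt_nonneg _), hsqrt, Real.mul_rpow hkr (by positivity),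
    Real.rpow_rpow_inv hk (by positivity), ← Real.rpow_mul (abs_nonneg _), mul_left_comm,
    ← Real.rpow_add_of_nonneg (abs_nonneg _) (sub_nonneg.2 (inv_le_one_of_one_le₀ hr)) hexp]
  ring_nf

/-- The density on `α × α` of `∑ₓ (Q ∗ |u|^p) |w|^(p - 1) |v|`. -/
def tripleDensity (Q : α → α → ℝ) (p : ℝ) (u w v : α → ℝ) (z : α × α) : ℝ :=
  Q z.1 z.2 * |u z.2| ^ p * (|w z.1| ^ (p - 1) * |v z.1|)

lemma rpow_mul_rpow_sq_eq {p : ℝ} (hp : 1 < p) (a b : ℝ) :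
    (|a ^ 2| ^ (1 - p⁻¹) * |b ^ 2| ^ p⁻¹) ^ (p / 2) = |a| ^ (p - 1) * |b| := by
  have hp0 : p ≠ 0 := by linarith
  rw [abs_pow, abs_pow, ← Real.rpow_natCast_mul (abs_nonneg a),
    ← Real.rpow_natCast_mul (abs_nonneg b), Real.mul_rpow (by positivity) (by positivity),
    ← Real.rpow_mul (abs_nonneg a), ← Real.rpow_mul (abs_nonneg b)]
  congr 2
  · push_cast; field_simp
  · convert Real.rpow_one |b| using 2; push_cast; field_simp

lemma tripleDensity_eq {r p : ℝ} (hr : 1 ≤ r) (hp : 1 < p) (Q : α → α → ℝ) (u w v : α → ℝ)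
    (z : α × α) :
    tripleDensity Q p u w v z = Q z.1 z.2 *
      (|(|(|w z.1 ^ 2| ^ (1 - p⁻¹) * |v z.1 ^ 2| ^ p⁻¹)| ^ (p / 2 / (1 - r⁻¹ / 2)))| *
        |(|u z.2 ^ 2| ^ (p / 2 / (1 - r⁻¹ / 2)))|) ^ (1 - r⁻¹ / 2) := by
  have hτ : 1 - r⁻¹ / 2 ≠ 0 := by linarith [inv_le_one_of_one_le₀ hr]
  have hwv : 0 ≤ |w z.1 ^ 2| ^ (1 - p⁻¹) * |v z.1 ^ 2| ^ p⁻¹ := by positivity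
  rw [Real.abs_rpow_of_nonneg (abs_nonneg _), Real.abs_rpow_of_nonneg (abs_nonneg _), abs_abs,
    abs_abs, abs_of_nonneg hwv, ← Real.mul_rpow hwv (abs_nonneg _),
    ← Real.rpow_mul (by positivity), div_mul_cancel₀ _ hτ, Real.mul_rpow hwv (abs_nonneg _),
    rpow_mul_rpow_sq_eq hp, abs_pow, ← Real.rpow_natCast_mul (abs_nonneg _), tripleDensity]
  push_cast
  rw [mul_div_cancel₀ p two_ne_zero]
  ring

namespace IsHLSKernel

variable {r p : ℝ} {Q : α → α → ℝ} {f g : ι → α → ℝ}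

lemma l1Bounded_row (hQ : IsHLSKernel r p Q) (hf : L1Bounded f) :
    L1Bounded fun i (z : α × α) => f i z.1 * Q z.1 z.2 ^ r :=
  hf.fiber (k := fun _ x y => Q x y ^ r) (hQ.rows.comp Prod.snd)

lemma l1Bounded_col (hQ : IsHLSKernel r p Q) (hg : L1Bounded g) :
    L1Bounded fun i (z : α × α) => g i z.2 * Q z.1 z.2 ^ r :=
  (hg.fiber (k := fun _ y x => Q x y ^ r) (hQ.cols.comp Prod.snd)).comp_injective
    fun _ => Prod.swap_injective

lemma l1Tight_row (hQ : IsHLSKernel r p Q) (hf : L1Bounded f) (hft : L1Tight f) :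
    L1Tight fun i (z : α × α) => f i z.1 * Q z.1 z.2 ^ r :=
  hft.fiber hf hQ.rows

lemma l1Tight_col (hQ : IsHLSKernel r p Q) (hg : L1Bounded g) (hgt : L1Tight g) :
    L1Tight fun i (z : α × α) => g i z.2 * Q z.1 z.2 ^ r :=
  (hgt.fiber hg hQ.cols).comp_equiv (Equiv.prodComm α α)

lemma l1Bounded_mul_rpow (hQ : IsHLSKernel r p Q) (hf : L1Bounded f) (hg : L1Bounded g) :
    L1Bounded fun i (z : α × α) => Q z.1 z.2 * (|f i z.1| * |g i z.2|) ^ (1 - r⁻¹ / 2) := by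
  have hprod : L1Bounded fun i (z : α × α) => f i z.1 * g i z.2 :=
    hf.fiber (k := fun i _ y => g i y) (hg.comp Prod.fst)
  simp only [kernel_mul_rpow_eq hQ.one_le (hQ.nonneg _ _)]
  exact hprod.rpow_mul_rpow ((hQ.l1Bounded_row hf).sqrt_mul (hQ.l1Bounded_col hg))
    (inv_pos.2 (one_pos.trans_le hQ.one_le)) (inv_le_one_of_one_le₀ hQ.one_le)

lemma l1Tight_mul_rpow (hQ : IsHLSKernel r p Q) (hf : L1Bounded f) (hg : L1Bounded g)
    (ht : L1Tight f ∨ L1Tight g) :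
    L1Tight fun i (z : α × α) => Q z.1 z.2 * (|f i z.1| * |g i z.2|) ^ (1 - r⁻¹ / 2) := by
  have hprod : L1Bounded fun i (z : α × α) => f i z.1 * g i z.2 :=
    hf.fiber (k := fun i _ y => g i y) (hg.comp Prod.fst)
  simp only [kernel_mul_rpow_eq hQ.one_le (hQ.nonneg _ _)]
  exact .rpow_mul_rpow hprod (.sqrt_mul (hQ.l1Bounded_row hf) (hQ.l1Bounded_col hg)
    (ht.imp (hQ.l1Tight_row hf) (hQ.l1Tight_col hg)))
    (inv_pos.2 (one_pos.trans_le hQ.one_le)) (inv_le_one_of_one_le₀ hQ.one_le)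

lemma one_le_half_div (hQ : IsHLSKernel r p Q) : 1 ≤ p / 2 / (1 - r⁻¹ / 2) := by
  have := inv_le_one_of_one_le₀ hQ.one_le
  rw [one_le_div (by linarith)]
  linarith [hQ.two_sub_inv_le]

lemma l1Bounded_tripleDensity (hQ : IsHLSKernel r p Q) (hp : 1 < p) {u w v : ι → α → ℝ}
    (hu : L2Bounded u) (hw : L2Bounded w) (hv : L2Bounded v) :
    L1Bounded fun i => tripleDensity Q p (u i) (w i) (v i) := by
  have hwv := hw.rpow_mul_rpow hv (inv_pos.2 (one_pos.trans hp)) (inv_le_one_of_one_le₀ hp.le)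
  have ht := hQ.one_le_half_div
  have hprod := hQ.l1Bounded_mul_rpow (hwv.rpow ht) (hu.rpow ht)
  exact hprod.mono fun i z => (congrArg abs (tripleDensity_eq hQ.one_le hp Q _ _ _ z)).le

lemma l1Tight_tripleDensity (hQ : IsHLSKernel r p Q) (hp : 1 < p) {u w v : ι → α → ℝ}
    (hu : L2Bounded u) (hw : L2Bounded w) (hv : L2Bounded v)
    (htight : L2Tight u ∨ L2Tight w ∨ L2Tight v) :
    L1Tight fun i => tripleDensity Q p (u i) (w i) (v i) := by
  have hp0 : 0 < p⁻¹ := inv_pos.2 (one_pos.trans hp)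
  have hp1 : p⁻¹ < 1 := inv_lt_one_of_one_lt₀ hp
  have hwv := hw.rpow_mul_rpow hv hp0 hp1.le
  have ht := hQ.one_le_half_div
  suffices h : L1Tight (fun i x => |(|w i x ^ 2| ^ (1 - p⁻¹) * |v i x ^ 2| ^ p⁻¹)| ^
      (p / 2 / (1 - r⁻¹ / 2))) ∨ L1Tight (fun i x => |u i x ^ 2| ^ (p / 2 / (1 - r⁻¹ / 2))) by
    have := hQ.l1Tight_mul_rpow (hwv.rpow ht) (hu.rpow ht) h
    simpa only [← tripleDensity_eq hQ.one_le hp Q] using this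
  rcases htight with hut | hwt | hvt
  · exact .inr (hut.rpow hu ht)
  · exact .inl ((hwt.rpow_mul_rpow_left hv hp0.le hp1).rpow hwv ht)
  · exact .inl ((L1Tight.rpow_mul_rpow hw hvt hp0 hp1.le).rpow hwv ht)

end IsHLSKernel

end Kernel

section Pairing

variable {ι α : Type*} {r p : ℝ} {Q : α → α → ℝ}

/-- The density on `α × α` of the pairing `∑ₓ (Q ∗ |u|^p) |u|^(p - 2) u v`. -/
def pairDensity (Q : α → α → ℝ) (p : ℝ) (u v : α → ℝ) (z : α × α) : ℝ :=
  Q z.1 z.2 * |u z.2| ^ p * (signedPow p (u z.1) * v z.1)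

lemma abs_pairDensity (hQ : ∀ x y, 0 ≤ Q x y) (hp : 1 < p) (u v : α → ℝ) (z : α × α) :
    |pairDensity Q p u v z| = tripleDensity Q p u u v z := by
  rw [pairDensity, abs_mul, abs_mul _ (v z.1), abs_signedPow hp,
    abs_of_nonneg (mul_nonneg (hQ _ _) (by positivity)), tripleDensity]

lemma exists_abs_rpow_signedPow_add_sub_le (hp : 1 < p) {η : ℝ} (hη : 0 < η) :
    ∃ C, 1 ≤ C ∧ (∀ a b : ℝ, |(|a + b| ^ p - |b| ^ p)| ≤ η * |b| ^ p + C * |a| ^ p) ∧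
      ∀ a b : ℝ, |signedPow p (a + b) - signedPow p b| ≤
        η * |b| ^ (p - 1) + C * |a| ^ (p - 1) := by
  obtain ⟨A, hA⟩ := (isPowerLike_abs_rpow p).exists_abs_sub_le (one_pos.trans hp) hη
  obtain ⟨B, hB⟩ := (isPowerLike_signedPow hp).exists_abs_sub_le (sub_pos.2 hp) hη
  refine ⟨max (max A B) 1, le_max_right _ _, fun a b => (hA (a + b) b).trans ?_,
    fun a b => (hB (a + b) b).trans ?_⟩
  all_goals
    rw [add_sub_cancel_right]
    gcongr
    simp

/-- The remainder in the Brezis–Lieb splitting of the pairing along `u + w`. -/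
def splitDensity (Q : α → α → ℝ) (p : ℝ) (u w v : α → ℝ) (z : α × α) : ℝ :=
  pairDensity Q p (u + w) v z - pairDensity Q p u v z - pairDensity Q p w v z

lemma exists_abs_splitDensity_le (hQ : ∀ x y, 0 ≤ Q x y) (hp : 1 < p) {η : ℝ} (hη : 0 < η) :
    ∃ C, ∀ (u w v : α → ℝ) (z : α × α), |splitDensity Q p u w v z| ≤
      η * |tripleDensity Q p w (u + w) v z + tripleDensity Q p w w v z| +
      C * |tripleDensity Q p u (u + w) v z + tripleDensity Q p w u v z
        + tripleDensity Q p u u v z| := by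
  obtain ⟨C, hC1, hpow, hsigned⟩ := exists_abs_rpow_signedPow_add_sub_le hp hη
  refine ⟨C, fun u w v z => ?_⟩
  have hself :
      |(-(|u z.2| ^ p * signedPow p (u z.1)))| ≤ C * (|u z.2| ^ p * |u z.1| ^ (p - 1)) := by
    rw [abs_neg, abs_mul, abs_signedPow hp, abs_of_nonneg (by positivity : 0 ≤ |u z.2| ^ p)]
    exact le_mul_of_one_le_left (by positivity) hC1
  calc |splitDensity Q p u w v z|
      = Q z.1 z.2 * |v z.1| * |(|u z.2 + w z.2| ^ p - |w z.2| ^ p) * signedPow p (u z.1 + w z.1)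
          + |w z.2| ^ p * (signedPow p (u z.1 + w z.1) - signedPow p (w z.1))
          + -(|u z.2| ^ p * signedPow p (u z.1))| := by
        conv_rhs => rw [← abs_of_nonneg (hQ z.1 z.2), ← abs_mul, ← abs_mul]
        simp only [splitDensity, pairDensity, Pi.add_apply]
        ring_nf
    _ ≤ Q z.1 z.2 * |v z.1| * ((η * |w z.2| ^ p + C * |u z.2| ^ p) * |u z.1 + w z.1| ^ (p - 1)
          + |w z.2| ^ p * (η * |w z.1| ^ (p - 1) + C * |u z.1| ^ (p - 1))
          + C * (|u z.2| ^ p * |u z.1| ^ (p - 1))) := by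
        refine mul_le_mul_of_nonneg_left ((abs_add_three _ _ _).trans ?_)
          (mul_nonneg (hQ _ _) (abs_nonneg _))
        rw [abs_mul, abs_mul (|w z.2| ^ p), abs_signedPow hp,
          abs_of_nonneg (by positivity : 0 ≤ |w z.2| ^ p)]
        gcongr
        exacts [hpow _ _, hsigned _ _]
    _ = η * (tripleDensity Q p w (u + w) v z + tripleDensity Q p w w v z) +
        C * (tripleDensity Q p u (u + w) v z + tripleDensity Q p w u v z
          + tripleDensity Q p u u v z) := by
        simp only [tripleDensity, Pi.add_apply]
        ring
    _ ≤ _ := by gcongr <;> exact le_abs_self _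

lemma tendsto_pairDensity (hp : 1 < p) {l : Filter ι} {u v : ι → α → ℝ} {u₀ v₀ : α → ℝ}
    (hu : ∀ x, Tendsto (fun i => u i x) l (nhds (u₀ x)))
    (hv : ∀ x, Tendsto (fun i => v i x) l (nhds (v₀ x))) (z : α × α) :
    Tendsto (fun i => pairDensity Q p (u i) (v i) z) l (nhds (pairDensity Q p u₀ v₀ z)) := by
  have hsigned : Continuous (signedPow p) := (isPowerLike_signedPow hp).continuous (sub_pos.2 hp)
  exact (((hu z.2).abs.rpow_const (.inr (by linarith))).const_mul _).mul
    (((hsigned.tendsto _).comp (hu z.1)).mul (hv z.1))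

lemma tendsto_splitDensity (hp : 1 < p) {l : Filter ι} (u : α → ℝ) {w v : ι → α → ℝ}
    (hv : L2Bounded v) (hw : ∀ x, Tendsto (fun i => w i x) l (nhds 0)) (z : α × α) :
    Tendsto (fun i => splitDensity Q p u (w i) (v i) z) l (nhds 0) := by
  obtain ⟨C, hC⟩ := hv.exists_abs_le
  have hv_le : ∀ i, |v i z.1| ≤ C + 1 := fun i => by
    nlinarith [hC i z.1, abs_nonneg (v i z.1), abs_of_nonneg (sq_nonneg (v i z.1)),
      sq_abs (v i z.1)]
  have huw : ∀ x, Tendsto (fun i => (u + w i) x) l (nhds (u x)) := fun x => by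
    simpa using (hw x).const_add (u x)
  have hone : ∀ _ : α, Tendsto (fun _ : ι => (1 : ℝ)) l (nhds 1) := fun _ => tendsto_const_nhds
  have hlim : Tendsto (fun i => splitDensity Q p u (w i) (fun _ => 1) z) l (nhds 0) := by
    have := ((tendsto_pairDensity (Q := Q) hp huw hone z).sub_const (pairDensity Q p u 1 z)).sub
      (tendsto_pairDensity (Q := Q) (u₀ := 0) hp hw hone z)
    simpa [splitDensity, pairDensity, signedPow] using this
  refine (bdd_le_mul_tendsto_zero' (C + 1) (Eventually.of_forall hv_le) hlim).congr fun i => ?_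
  simp only [splitDensity, pairDensity]
  ring

namespace IsHLSKernel

lemma l1Bounded_pairDensity (hQ : IsHLSKernel r p Q) (hp : 1 < p) {u v : ι → α → ℝ}
    (hu : L2Bounded u) (hv : L2Bounded v) : L1Bounded fun i => pairDensity Q p (u i) (v i) :=
  (hQ.l1Bounded_tripleDensity hp hu hu hv).mono fun i z => by
    rw [abs_pairDensity hQ.nonneg hp]
    exact le_abs_self _

lemma l1Tight_pairDensity (hQ : IsHLSKernel r p Q) (hp : 1 < p) {u v : ι → α → ℝ}
    (hu : L2Bounded u) (hv : L2Bounded v)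
    (ht : L2Tight u ∨ L2Tight v) : L1Tight fun i => pairDensity Q p (u i) (v i) := by
  refine (hQ.l1Tight_tripleDensity hp hu hu hv (ht.imp_right .inr)).mono fun i z => ?_
  rw [abs_pairDensity hQ.nonneg hp]
  exact le_abs_self _

lemma l1Tight_splitDensity (hQ : IsHLSKernel r p Q) (hp : 1 < p) {u w v : ι → α → ℝ}
    (hu : L2Bounded u) (hut : L2Tight u) (hw : L2Bounded w) (hv : L2Bounded v) :
    L1Tight fun i => splitDensity Q p (u i) (w i) (v i) := by
  have huw : L2Bounded (u + w) := hu.add hw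
  have hT {a b : ι → α → ℝ} (ha : L2Bounded a) (hb : L2Bounded b) :=
    hQ.l1Bounded_tripleDensity hp ha hb hv
  have hTt {a b : ι → α → ℝ} (ha : L2Bounded a) (hb : L2Bounded b) (ht : L2Tight a ∨ L2Tight b) :=
    hQ.l1Tight_tripleDensity hp ha hb hv (ht.imp_right .inl)
  refine .of_forall_le ((hT hw huw).add (hT hw hw))
    (((hTt hu huw (.inl hut)).add (hTt hw hu (.inr hut))).add (hTt hu hu (.inl hut)))
    fun η hη => ?_
  obtain ⟨C, hC⟩ := exists_abs_splitDensity_le hQ.nonneg hp hη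
  exact ⟨C, fun i z => hC (u i) (w i) (v i) z⟩

end IsHLSKernel

end Pairing

section NonlocalTerm

variable {ι α : Type*} [DecidableEq α] {r p : ℝ} {R : α → α → ℝ}

/-- The kernel `R` with its diagonal removed, which is what `conv R` sums against. -/
def offDiag (R : α → α → ℝ) (x y : α) : ℝ := if y = x then 0 else R x y

lemma conv_mul_eq_tsum (R : α → α → ℝ) (f : α → ℝ) (x : α) (c : ℝ) :
    conv R f x * c = ∑' y, offDiag R x y * f y * c := by
  rw [conv, ← tsum_mul_right]
  simp only [offDiag, ite_mul, zero_mul]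

lemma Kterm_smul_right (R : α → α → ℝ) (p t : ℝ) (u v : α → ℝ) :
    Kterm R p u (t • v) = t * Kterm R p u v := by
  rw [Kterm, Kterm, ← tsum_mul_left]
  refine tsum_congr fun x => ?_
  rw [Pi.smul_apply, smul_eq_mul]
  ring

lemma Dterm_eq_Kterm (R : α → α → ℝ) (hp : 1 < p) (u : α → ℝ) :
    Dterm R p u = Kterm R p u u :=
  tsum_congr fun x => by rw [← signedPow, signedPow_mul_self hp]

namespace IsHLSKernel

lemma summable_pairDensity (hR : IsHLSKernel r p (offDiag R)) (hp : 1 < p) {u v : α → ℝ}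
    (hu : Summable fun x => u x ^ 2) (hv : Summable fun x => v x ^ 2) :
    Summable (pairDensity (offDiag R) p u v) :=
  (hR.l1Bounded_pairDensity hp (u := fun _ : Unit => u) (v := fun _ => v)
    (.of_summable hu) (.of_summable hv)).summable ()

lemma Kterm_eq_tsum (hR : IsHLSKernel r p (offDiag R)) (hp : 1 < p) {u v : α → ℝ}
    (hu : Summable fun x => u x ^ 2) (hv : Summable fun x => v x ^ 2) :
    Kterm R p u v = ∑' z, pairDensity (offDiag R) p u v z := by
  rw [(hR.summable_pairDensity hp hu hv).tsum_prod]
  exact tsum_congr fun x => conv_mul_eq_tsum R _ x _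

lemma Kterm_add_right (hR : IsHLSKernel r p (offDiag R)) (hp : 1 < p) {u v w : α → ℝ}
    (hu : Summable fun x => u x ^ 2) (hv : Summable fun x => v x ^ 2)
    (hw : Summable fun x => w x ^ 2) :
    Kterm R p u (v + w) = Kterm R p u v + Kterm R p u w := by
  rw [hR.Kterm_eq_tsum hp hu hv, hR.Kterm_eq_tsum hp hu hw,
    hR.Kterm_eq_tsum hp hu (summable_sq_add hv hw),
    ← (hR.summable_pairDensity hp hu hv).tsum_add (hR.summable_pairDensity hp hu hw)]
  refine tsum_congr fun z => ?_
  simp only [pairDensity, Pi.add_apply]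
  ring

lemma exists_abs_Kterm_le (hR : IsHLSKernel r p (offDiag R)) (hp : 1 < p) {u v : ι → α → ℝ}
    (hu : L2Bounded u) (hv : L2Bounded v) : ∃ C, ∀ i, |Kterm R p (u i) (v i)| ≤ C := by
  simpa only [hR.Kterm_eq_tsum hp (hu.summable _) (hv.summable _)] using
    (hR.l1Bounded_pairDensity hp hu hv).exists_abs_tsum_le

lemma tendsto_Kterm_zero (hR : IsHLSKernel r p (offDiag R)) (hp : 1 < p) {l : Filter ι}
    {u v : ι → α → ℝ} (hu : L2Bounded u) (hv : L2Bounded v) (ht : L2Tight u ∨ L2Tight v)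
    (h : ∀ z, Tendsto (fun i => pairDensity (offDiag R) p (u i) (v i) z) l (nhds 0)) :
    Tendsto (fun i => Kterm R p (u i) (v i)) l (nhds 0) := by
  simpa only [hR.Kterm_eq_tsum hp (hu.summable _) (hv.summable _)] using
    (hR.l1Tight_pairDensity hp hu hv ht).tendsto_tsum_zero h

variable {l : Filter ι} {w : ι → α → ℝ}

lemma tendsto_Kterm_left (hR : IsHLSKernel r p (offDiag R)) (hp : 1 < p) {v : α → ℝ}
    (hv : Summable fun x => v x ^ 2) (hw : L2Bounded w)
    (hlim : ∀ x, Tendsto (fun i => w i x) l (nhds 0)) :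
    Tendsto (fun i => Kterm R p (w i) v) l (nhds 0) := by
  refine hR.tendsto_Kterm_zero hp hw (.of_summable hv) (.inr (.of_summable hv)) fun z => ?_
  simpa [pairDensity, signedPow] using tendsto_pairDensity (Q := offDiag R) (u₀ := 0) hp hlim
    (fun x => tendsto_const_nhds (x := v x)) z

lemma tendsto_Kterm_right (hR : IsHLSKernel r p (offDiag R)) (hp : 1 < p) {u : α → ℝ}
    (hu : Summable fun x => u x ^ 2) (hw : L2Bounded w)
    (hlim : ∀ x, Tendsto (fun i => w i x) l (nhds 0)) :
    Tendsto (fun i => Kterm R p u (w i)) l (nhds 0) := by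
  refine hR.tendsto_Kterm_zero hp (.of_summable hu) hw (.inl (.of_summable hu)) fun z => ?_
  simpa [pairDensity] using tendsto_pairDensity (Q := offDiag R) (v₀ := 0) hp
    (fun x => tendsto_const_nhds (x := u x)) hlim z

lemma tendsto_Kterm_split (hR : IsHLSKernel r p (offDiag R)) (hp : 1 < p) {u : α → ℝ}
    {v : ι → α → ℝ} (hu : Summable fun x => u x ^ 2) (hw : L2Bounded w) (hv : L2Bounded v)
    (hlim : ∀ x, Tendsto (fun i => w i x) l (nhds 0)) :
    Tendsto (fun i => Kterm R p (u + w i) (v i) - Kterm R p u (v i) - Kterm R p (w i) (v i)) l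
      (nhds 0) := by
  have huB : L2Bounded fun _ : ι => u := .of_summable hu
  have huw (i : ι) := summable_sq_add hu (hw.summable i)
  refine ((hR.l1Tight_splitDensity hp huB (.of_summable hu) hw hv).tendsto_tsum_zero
    (tendsto_splitDensity hp u hv hlim)).congr fun i => ?_
  have hwi := hw.summable i
  have hvi := hv.summable i
  rw [hR.Kterm_eq_tsum hp (huw i) hvi, hR.Kterm_eq_tsum hp hu hvi, hR.Kterm_eq_tsum hp hwi hvi,
    ← (hR.summable_pairDensity hp (huw i) hvi).tsum_sub (hR.summable_pairDensity hp hu hvi),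
    ← ((hR.summable_pairDensity hp (huw i) hvi).sub (hR.summable_pairDensity hp hu hvi)).tsum_sub
      (hR.summable_pairDensity hp hwi hvi)]
  rfl

lemma tendsto_Dterm_split (hR : IsHLSKernel r p (offDiag R)) (hp : 1 < p) {u : α → ℝ}
    (hu : Summable fun x => u x ^ 2) (hw : L2Bounded w)
    (hlim : ∀ x, Tendsto (fun i => w i x) l (nhds 0)) :
    Tendsto (fun i => Dterm R p (u + w i) - Dterm R p u - Dterm R p (w i)) l (nhds 0) := by
  have huB : L2Bounded fun _ : ι => u := .of_summable hu
  have hsum := (((hR.tendsto_Kterm_split hp hu hw huB hlim).add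
    (hR.tendsto_Kterm_split hp hu hw hw hlim)).add (hR.tendsto_Kterm_left hp hu hw hlim)).add
    (hR.tendsto_Kterm_right hp hu hw hlim)
  simp only [add_zero] at hsum
  refine hsum.congr fun i => ?_
  have hwi := hw.summable i
  simp only [Dterm_eq_Kterm R hp, hR.Kterm_add_right hp (summable_sq_add hu hwi) hu hwi]
  ring

end IsHLSKernel

end NonlocalTerm

section Energy

variable {ι G : Type*} [Group G] {S : Finset G} {a : G → ℝ} {lam : ℝ}

/-- The integrand of the inner product of `E_λ` at `x`, as a bilinear form in the functions. -/
def energyForm (S : Finset G) (a : G → ℝ) (lam : ℝ) (x : G) : LinearMap.BilinForm ℝ (G → ℝ) :=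
  LinearMap.mk₂ ℝ
    (fun u v => lap S u x * lap S v x + grad S u v x + (1 + lam * a x) * (u x * v x))
    (fun u u' v => by
      simp only [lap, grad, Pi.add_apply, add_sub_add_comm, Finset.sum_add_distrib, add_mul]; ring)
    (fun t u v => by
      simp only [lap, grad, Pi.smul_apply, smul_eq_mul, ← mul_sub, mul_assoc, ← Finset.mul_sum]
      ring)
    (fun u v v' => by
      simp only [lap, grad, Pi.add_apply, add_sub_add_comm, Finset.sum_add_distrib, mul_add]; ring)
    (fun t u v => by
      simp only [lap, grad, Pi.smul_apply, smul_eq_mul, ← mul_sub, mul_left_comm _ t,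
        ← Finset.mul_sum]
      ring)

lemma innerE_eq_tsum (u v : G → ℝ) : innerE S a lam u v = ∑' x, energyForm S a lam x u v := rfl

lemma energyForm_self (u : G → ℝ) (x : G) : energyForm S a lam x u u = eDensity S a lam u x := by
  rw [eDensity, sq, sq]; rfl

lemma energyForm_comm (u v : G → ℝ) (x : G) :
    energyForm S a lam x u v = energyForm S a lam x v u := by
  simp only [energyForm, LinearMap.mk₂_apply, grad, mul_comm]

lemma eDensity_add (u v : G → ℝ) (x : G) : eDensity S a lam (u + v) x =
    eDensity S a lam u x + eDensity S a lam v x + 2 * energyForm S a lam x u v := by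
  simp only [← energyForm_self, map_add, LinearMap.add_apply, energyForm_comm v u]
  ring

lemma eDensity_smul (t : ℝ) (u : G → ℝ) (x : G) :
    eDensity S a lam (t • u) x = t ^ 2 * eDensity S a lam u x := by
  simp only [← energyForm_self, map_smul, LinearMap.smul_apply, smul_eq_mul]
  ring

lemma sq_le_eDensity (hV : ∀ x, 0 ≤ lam * a x) (u : G → ℝ) (x : G) :
    u x ^ 2 ≤ eDensity S a lam u x := by
  have hgrad : 0 ≤ grad S u u x :=
    mul_nonneg one_half_pos.le (Finset.sum_nonneg fun s _ => mul_self_nonneg _)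
  have := mul_nonneg (hV x) (sq_nonneg (u x))
  rw [eDensity]
  linarith [sq_nonneg (lap S u x)]

lemma eDensity_nonneg (hV : ∀ x, 0 ≤ lam * a x) (u : G → ℝ) (x : G) : 0 ≤ eDensity S a lam u x :=
  (sq_nonneg _).trans (sq_le_eDensity hV u x)

lemma abs_energyForm_le (hV : ∀ x, 0 ≤ lam * a x) (u v : G → ℝ) (x : G) :
    |energyForm S a lam x u v| ≤ √(|eDensity S a lam u x| * |eDensity S a lam v x|) := by
  rw [abs_of_nonneg (eDensity_nonneg hV u x), abs_of_nonneg (eDensity_nonneg hV v x)]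
  refine Real.abs_le_sqrt ?_
  simpa only [energyForm_self] using (energyForm S a lam x).apply_sq_le_of_symm
    (fun w => (energyForm_self w x).symm ▸ eDensity_nonneg hV w x)
    ⟨fun w w' => energyForm_comm w w' x⟩ u v

lemma eDensity_sub_le (hV : ∀ x, 0 ≤ lam * a x) (u v : G → ℝ) (x : G) :
    eDensity S a lam (u - v) x ≤ 2 * (eDensity S a lam u x + eDensity S a lam v x) := by
  have hsum := eDensity_nonneg (S := S) hV (u + v) x
  have hneg := eDensity_smul (S := S) (a := a) (lam := lam) (-1) v x
  have hsub := eDensity_add (S := S) (a := a) (lam := lam) u ((-1 : ℝ) • v) x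
  rw [eDensity_add] at hsum
  rw [map_smul, neg_one_smul, neg_one_smul, ← sub_eq_add_neg] at hsub
  rw [neg_one_smul] at hneg
  linarith

lemma tendsto_energyForm {l : Filter ι} {u v : ι → G → ℝ} {u₀ v₀ : G → ℝ}
    (hu : ∀ x, Tendsto (fun i => u i x) l (nhds (u₀ x)))
    (hv : ∀ x, Tendsto (fun i => v i x) l (nhds (v₀ x))) (x : G) :
    Tendsto (fun i => energyForm S a lam x (u i) (v i)) l (nhds (energyForm S a lam x u₀ v₀)) := by
  have hdiff {w : ι → G → ℝ} {w₀ : G → ℝ} (hw : ∀ x, Tendsto (fun i => w i x) l (nhds (w₀ x)))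
      (s : G) : Tendsto (fun i => w i (x * s) - w i x) l (nhds (w₀ (x * s) - w₀ x)) :=
    (hw _).sub (hw x)
  exact (((tendsto_finsetSum S fun s _ => hdiff hu s).mul
    (tendsto_finsetSum S fun s _ => hdiff hv s)).add
    ((tendsto_finsetSum S fun s _ => (hdiff hu s).mul (hdiff hv s)).const_mul _)).add
    (((hu x).mul (hv x)).const_mul _)

/-- A family bounded in `E_λ`. -/
abbrev EnergyBounded (S : Finset G) (a : G → ℝ) (lam : ℝ) (u : ι → G → ℝ) : Prop :=
  L1Bounded fun i => eDensity S a lam (u i)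

lemma energyBounded_of_normEsq_le (hV : ∀ x, 0 ≤ lam * a x) {u : ι → G → ℝ} {C : ℝ}
    (hu : ∀ i, MemE S a lam (u i)) (hC : ∀ i, normEsq S a lam (u i) ≤ C) :
    EnergyBounded S a lam u := by
  refine ⟨C, fun i s => ?_⟩
  simp only [abs_of_nonneg (eDensity_nonneg hV _ _)]
  exact ((hu i).sum_le_tsum s fun x _ => eDensity_nonneg hV _ x).trans (hC i)

lemma normEsq_nonneg (hV : ∀ x, 0 ≤ lam * a x) (u : G → ℝ) : 0 ≤ normEsq S a lam u :=
  tsum_nonneg (eDensity_nonneg hV u)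

lemma sq_normE (hV : ∀ x, 0 ≤ lam * a x) (u : G → ℝ) : normE S a lam u ^ 2 = normEsq S a lam u :=
  Real.sq_sqrt (normEsq_nonneg hV u)

lemma normEsq_smul (t : ℝ) (u : G → ℝ) :
    normEsq S a lam (t • u) = t ^ 2 * normEsq S a lam u := by
  simp only [normEsq, eDensity_smul, tsum_mul_left]

lemma MemE.smul {u : G → ℝ} (hu : MemE S a lam u) (t : ℝ) : MemE S a lam (t • u) := by
  simpa only [MemE, funext (eDensity_smul t u)] using Summable.mul_left (t ^ 2) hu

lemma MemE.sq_le_normEsq {u : G → ℝ} (hu : MemE S a lam u) (hV : ∀ x, 0 ≤ lam * a x) (x : G) :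
    u x ^ 2 ≤ normEsq S a lam u :=
  (sq_le_eDensity hV u x).trans (hu.le_tsum x fun y _ => eDensity_nonneg hV u y)

lemma MemE.eq_zero_of_normE {u : G → ℝ} (hu : MemE S a lam u) (hV : ∀ x, 0 ≤ lam * a x)
    (h : normE S a lam u = 0) : u = 0 :=
  funext fun x => pow_eq_zero_iff two_ne_zero |>.1 <| le_antisymm
    (by simpa only [← sq_normE hV, h, ne_eq, two_ne_zero, not_false_eq_true, zero_pow] using
      hu.sq_le_normEsq hV x) (sq_nonneg _)

lemma MemE.summable_sq {u : G → ℝ} (hu : MemE S a lam u) (hV : ∀ x, 0 ≤ lam * a x) :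
    Summable fun x => u x ^ 2 :=
  .of_nonneg_of_le (fun _ => sq_nonneg _) (sq_le_eDensity hV u) hu

namespace EnergyBounded

variable {u v : ι → G → ℝ}

lemma l2Bounded (hu : EnergyBounded S a lam u) (hV : ∀ x, 0 ≤ lam * a x) : L2Bounded u :=
  hu.mono fun _ x => by
    rw [abs_of_nonneg (sq_nonneg _)]
    exact (sq_le_eDensity hV _ x).trans (le_abs_self _)

lemma sub (hu : EnergyBounded S a lam u) (hv : EnergyBounded S a lam v)
    (hV : ∀ x, 0 ≤ lam * a x) : EnergyBounded S a lam fun i => u i - v i :=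
  ((L1Bounded.add hu hv).const_mul 2).mono fun _ x => by
    rw [abs_of_nonneg (eDensity_nonneg hV _ x)]
    exact (eDensity_sub_le hV _ _ x).trans (le_abs_self _)

lemma l1Bounded_energyForm (hu : EnergyBounded S a lam u) (hv : EnergyBounded S a lam v)
    (hV : ∀ x, 0 ≤ lam * a x) : L1Bounded fun i x => energyForm S a lam x (u i) (v i) :=
  (L1Bounded.sqrt_mul hu hv).mono fun _ x =>
    (abs_energyForm_le hV _ _ x).trans (le_abs_self _)

lemma memE_of_tendsto {l : Filter ι} [l.NeBot] {u₀ : G → ℝ} (hu : EnergyBounded S a lam u)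
    (hlim : ∀ x, Tendsto (fun i => u i x) l (nhds (u₀ x))) : MemE S a lam u₀ :=
  L1Bounded.summable_of_tendsto (l := l) hu fun x => by
    simpa only [energyForm_self] using tendsto_energyForm (S := S) (a := a) (lam := lam) hlim hlim x

lemma tendsto_innerE_zero {l : Filter ι} {w : ι → G → ℝ} {v : G → ℝ}
    (hw : EnergyBounded S a lam w) (hv : MemE S a lam v) (hV : ∀ x, 0 ≤ lam * a x)
    (hlim : ∀ x, Tendsto (fun i => w i x) l (nhds 0)) :
    Tendsto (fun i => innerE S a lam (w i) v) l (nhds 0) := by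
  have htight : L1Tight fun i x => energyForm S a lam x (w i) v :=
    (L1Tight.sqrt_mul hw (.of_summable hv) (.inr (.of_summable hv))).mono fun _ x =>
      (abs_energyForm_le hV _ _ x).trans (le_abs_self _)
  refine htight.tendsto_tsum_zero fun x => ?_
  simpa using tendsto_energyForm (S := S) (a := a) (lam := lam) (u₀ := 0) hlim
    (fun y => tendsto_const_nhds (x := v y)) x

end EnergyBounded

namespace MemE

variable {u v w : G → ℝ}

lemma energyBounded (hu : MemE S a lam u) : EnergyBounded S a lam fun _ : ι => u :=
  .of_summable hu

lemma summable_energyForm (hu : MemE S a lam u) (hv : MemE S a lam v)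
    (hV : ∀ x, 0 ≤ lam * a x) : Summable fun x => energyForm S a lam x u v :=
  (EnergyBounded.l1Bounded_energyForm (ι := Unit) hu.energyBounded hv.energyBounded hV).summable ()

lemma add (hu : MemE S a lam u) (hw : MemE S a lam w) (hV : ∀ x, 0 ≤ lam * a x) :
    MemE S a lam (u + w) := by
  simpa only [MemE, funext (eDensity_add u w)] using
    (Summable.add hu hw).add ((hu.summable_energyForm hw hV).mul_left 2)

lemma innerE_add_left (hu : MemE S a lam u) (hw : MemE S a lam w) (hv : MemE S a lam v)
    (hV : ∀ x, 0 ≤ lam * a x) :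
    innerE S a lam (u + w) v = innerE S a lam u v + innerE S a lam w v := by
  simp only [innerE_eq_tsum, map_add, LinearMap.add_apply]
  exact (hu.summable_energyForm hv hV).tsum_add (hw.summable_energyForm hv hV)

lemma normEsq_add (hu : MemE S a lam u) (hw : MemE S a lam w) (hV : ∀ x, 0 ≤ lam * a x) :
    normEsq S a lam (u + w) =
      normEsq S a lam u + normEsq S a lam w + 2 * innerE S a lam w u := by
  simp only [normEsq, eDensity_add, innerE_eq_tsum, energyForm_comm w u, ← tsum_mul_left]
  rw [(Summable.add hu hw).tsum_add ((hu.summable_energyForm hw hV).mul_left 2), hu.tsum_add hw]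

end MemE

end Energy

section Variational

variable {ι G : Type*} [Group G] [DecidableEq G] {S : Finset G} {a : G → ℝ} {lam r p : ℝ}
  {R : G → G → ℝ}

lemma Jd_smul_right (t : ℝ) (u v : G → ℝ) :
    Jd S a lam R p u (t • v) = t * Jd S a lam R p u v := by
  simp only [Jd, Kterm_smul_right, innerE_eq_tsum, map_smul, smul_eq_mul, tsum_mul_left, mul_sub]

lemma exists_abs_Jd_le (hV : ∀ x, 0 ≤ lam * a x) (hR : IsHLSKernel r p (offDiag R)) (hp : 1 < p)
    {u v : ι → G → ℝ} (hu : EnergyBounded S a lam u) (hv : EnergyBounded S a lam v) :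
    ∃ C, ∀ i, |Jd S a lam R p (u i) (v i)| ≤ C := by
  obtain ⟨C, hC⟩ := (hu.l1Bounded_energyForm hv hV).exists_abs_tsum_le
  obtain ⟨D, hD⟩ := hR.exists_abs_Kterm_le hp (hu.l2Bounded hV) (hv.l2Bounded hV)
  exact ⟨C + D, fun i => (abs_sub _ _).trans (add_le_add (hC i) (hD i))⟩

lemma dualNorm_nonneg (u : G → ℝ) : 0 ≤ dualNorm S a lam R p u :=
  Real.sSup_nonneg <| by rintro _ ⟨v, -, -, rfl⟩; exact abs_nonneg _

lemma abs_Jd_le_dualNorm (hV : ∀ x, 0 ≤ lam * a x) (hR : IsHLSKernel r p (offDiag R)) (hp : 1 < p)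
    {u v : G → ℝ} (hu : MemE S a lam u) (hv : MemE S a lam v) (hv1 : normEsq S a lam v ≤ 1) :
    |Jd S a lam R p u v| ≤ dualNorm S a lam R p u := by
  have hball : EnergyBounded S a lam
      fun v : {v : G → ℝ // MemE S a lam v ∧ normEsq S a lam v ≤ 1} => v.1 :=
    energyBounded_of_normEsq_le hV (fun v => v.2.1) fun v => v.2.2
  obtain ⟨C, hC⟩ := exists_abs_Jd_le hV hR hp hu.energyBounded hball
  refine le_csSup ⟨C, ?_⟩ ⟨v, hv, hv1, rfl⟩
  rintro _ ⟨v', hv', hv'1, rfl⟩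
  exact hC ⟨v', hv', hv'1⟩

lemma abs_Jd_le_normE_mul_dualNorm (hV : ∀ x, 0 ≤ lam * a x) (hR : IsHLSKernel r p (offDiag R))
    (hp : 1 < p) {u v : G → ℝ} (hu : MemE S a lam u) (hv : MemE S a lam v) :
    |Jd S a lam R p u v| ≤ normE S a lam v * dualNorm S a lam R p u := by
  obtain h | h := (Real.sqrt_nonneg (normEsq S a lam v)).eq_or_lt'
  · have hzero : Jd S a lam R p u v = 0 := by
      rw [hv.eq_zero_of_normE hV h, ← zero_smul ℝ (0 : G → ℝ), Jd_smul_right, zero_mul]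
    rw [hzero, normE, h, abs_zero, zero_mul]
  · set t := √(normEsq S a lam v) with ht
    have hunit : normEsq S a lam (t⁻¹ • v) ≤ 1 := by
      rw [normEsq_smul, ← sq_normE hV, normE, ← ht, inv_pow, inv_mul_cancel₀ (by positivity)]
    have hle := abs_Jd_le_dualNorm hV hR hp hu (hv.smul t⁻¹) hunit
    rwa [Jd_smul_right, abs_mul, abs_of_pos (inv_pos.2 h), inv_mul_le_iff₀ h] at hle

lemma Jfun_sub_Jd_self (hp : 1 < p) (u : G → ℝ) :
    Jfun S a lam R p u - 1 / (2 * p) * Jd S a lam R p u u =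
      (1 / 2 - 1 / (2 * p)) * normEsq S a lam u := by
  have hinner : innerE S a lam u u = normEsq S a lam u := by
    simp only [innerE_eq_tsum, energyForm_self, normEsq]
  rw [Jfun, Jd, hinner, Dterm_eq_Kterm R hp]
  ring

lemma exists_normEsq_le (hV : ∀ x, 0 ≤ lam * a x) (hR : IsHLSKernel r p (offDiag R)) (hp : 1 < p)
    {u : ι → G → ℝ} (hu : ∀ i, MemE S a lam (u i)) {A B : ℝ}
    (hA : ∀ i, Jfun S a lam R p (u i) ≤ A) (hB : ∀ i, dualNorm S a lam R p (u i) ≤ B) :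
    ∃ C, ∀ i, normEsq S a lam (u i) ≤ C := by
  set κ : ℝ := 1 / (2 * p)
  set σ : ℝ := 1 / 2 - κ
  have hκ0 : 0 < κ := by positivity
  have hσ0 : 0 < σ := sub_pos.2 (one_div_lt_one_div_of_lt two_pos (by linarith only [hp]))
  refine ⟨(2 * A + (κ * B) ^ 2 / σ) / σ, fun i => ?_⟩
  set t : ℝ := normE S a lam (u i)
  have hJd : |Jd S a lam R p (u i) (u i)| ≤ t * B :=
    (abs_Jd_le_normE_mul_dualNorm hV hR hp (hu i) (hu i)).trans
      (mul_le_mul_of_nonneg_left (hB i) (Real.sqrt_nonneg _))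
  have hquad : σ * t ^ 2 ≤ A + κ * B * t := by
    have := mul_le_mul_of_nonneg_left (neg_le_of_abs_le hJd) hκ0.le
    have hJ : Jfun S a lam R p (u i) - κ * Jd S a lam R p (u i) (u i) = σ * t ^ 2 := by
      rw [sq_normE hV, Jfun_sub_Jd_self hp]
    linarith only [this, hA i, hJ]
  have hyoung : 2 * (κ * B * t) ≤ (κ * B) ^ 2 / σ + σ * t ^ 2 := by
    have hsq : (κ * B) ^ 2 / σ + σ * t ^ 2 - 2 * (κ * B * t) = (κ * B - σ * t) ^ 2 / σ := by
      field_simp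
      ring
    exact sub_nonneg.1 (hsq ▸ by positivity)
  rw [← sq_normE hV, le_div_iff₀' hσ0]
  linarith only [hquad, hyoung]

lemma exists_subseq_tendsto_pointwise {α : Type*} [Countable α] {u : ℕ → α → ℝ} {M : ℝ}
    (hM : ∀ n x, |u n x| ≤ M) :
    ∃ φ : ℕ → ℕ, StrictMono φ ∧ ∃ u₀ : α → ℝ,
      ∀ x, Tendsto (fun n => u (φ n) x) atTop (nhds (u₀ x)) := by
  obtain ⟨u₀, -, φ, hφ, hlim⟩ :=
    (isCompact_univ_pi fun _ : α => isCompact_Icc (a := -M) (b := M)).tendsto_subseq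
      (x := u) fun n x _ => abs_le.1 (hM n x)
  exact ⟨φ, hφ, u₀, tendsto_pi_nhds.1 hlim⟩

variable {l : Filter ι} {u : G → ℝ} {w : ι → G → ℝ}

lemma tendsto_Jfun_split (hV : ∀ x, 0 ≤ lam * a x) (hR : IsHLSKernel r p (offDiag R))
    (hp : 1 < p) (hu : MemE S a lam u) (hw : EnergyBounded S a lam w)
    (hlim : ∀ x, Tendsto (fun i => w i x) l (nhds 0)) :
    Tendsto (fun i => Jfun S a lam R p (u + w i) - Jfun S a lam R p u - Jfun S a lam R p (w i)) l
      (nhds 0) := by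
  have hsplit := (hw.tendsto_innerE_zero hu hV hlim).sub <|
    (hR.tendsto_Dterm_split hp (hu.summable_sq hV) (hw.l2Bounded hV) hlim).const_mul (1 / (2 * p))
  rw [mul_zero, sub_zero] at hsplit
  refine hsplit.congr fun i => ?_
  simp only [Jfun, hu.normEsq_add (hw.summable i) hV]
  ring

lemma tendsto_Jd_split (hV : ∀ x, 0 ≤ lam * a x) (hR : IsHLSKernel r p (offDiag R))
    (hp : 1 < p) (hu : MemE S a lam u) (hw : EnergyBounded S a lam w)
    (hlim : ∀ x, Tendsto (fun i => w i x) l (nhds 0)) {v : ι → G → ℝ}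
    (hv : EnergyBounded S a lam v) :
    Tendsto (fun i => Jd S a lam R p (u + w i) (v i) - Jd S a lam R p u (v i)
      - Jd S a lam R p (w i) (v i)) l (nhds 0) := by
  have hsplit := (hR.tendsto_Kterm_split hp (hu.summable_sq hV) (hw.l2Bounded hV)
    (hv.l2Bounded hV) hlim).neg
  rw [neg_zero] at hsplit
  refine hsplit.congr fun i => ?_
  simp only [Jd, hu.innerE_add_left (hw.summable i) (hv.summable i) hV]
  ring

lemma tendsto_Jd_zero (hV : ∀ x, 0 ≤ lam * a x) (hR : IsHLSKernel r p (offDiag R)) (hp : 1 < p)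
    (hw : EnergyBounded S a lam w) (hlim : ∀ x, Tendsto (fun i => w i x) l (nhds 0))
    {v : G → ℝ} (hv : MemE S a lam v) :
    Tendsto (fun i => Jd S a lam R p (w i) v) l (nhds 0) := by
  simpa only [Jd, sub_zero] using (hw.tendsto_innerE_zero hv hV hlim).sub
    (hR.tendsto_Kterm_left hp (hv.summable_sq hV) (hw.l2Bounded hV) hlim)

lemma tendsto_Jd_of_tendsto_dualNorm (hV : ∀ x, 0 ≤ lam * a x)
    (hR : IsHLSKernel r p (offDiag R)) (hp : 1 < p) {v : ι → G → ℝ}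
    (hw : ∀ i, MemE S a lam (w i)) (hv : ∀ i, MemE S a lam (v i)) {C : ℝ}
    (hC : ∀ i, normE S a lam (v i) ≤ C)
    (hdual : Tendsto (fun i => dualNorm S a lam R p (w i)) l (nhds 0)) :
    Tendsto (fun i => Jd S a lam R p (w i) (v i)) l (nhds 0) :=
  squeeze_zero_norm (fun i => (abs_Jd_le_normE_mul_dualNorm hV hR hp (hw i) (hv i)).trans
    (mul_le_mul_of_nonneg_right (hC i) (dualNorm_nonneg _)))
    (by simpa only [mul_zero] using hdual.const_mul C)

lemma exists_dualNorm_le_two_mul (u : G → ℝ) :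
    ∃ v, MemE S a lam v ∧ normEsq S a lam v ≤ 1 ∧
      dualNorm S a lam R p u ≤ 2 * |Jd S a lam R p u v| := by
  obtain h | h := (dualNorm_nonneg (S := S) (a := a) (lam := lam) (R := R) (p := p) u).eq_or_lt
  · have hzero (x : G) : eDensity S a lam 0 x = 0 := by simp [← energyForm_self]
    refine ⟨0, ?_, ?_, h ▸ by positivity⟩
    · simp only [MemE, funext hzero, summable_zero]
    · simp only [normEsq, hzero, tsum_zero, zero_le_one]
  · have hne : dualNorm S a lam R p u ≠ 0 := h.ne'
    obtain ⟨_, ⟨v, hv, hv1, rfl⟩, hlt⟩ := exists_lt_of_lt_csSup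
      (Set.nonempty_iff_ne_empty.2 fun hempty => hne <| by rw [dualNorm, hempty, Real.sSup_empty])
      (half_lt_self h)
    exact ⟨v, hv, hv1, by rw [← div_le_iff₀' two_pos]; exact hlt.le⟩

lemma tendsto_dualNorm_zero
    (h : ∀ v : ι → G → ℝ, (∀ i, MemE S a lam (v i)) → (∀ i, normEsq S a lam (v i) ≤ 1) →
      Tendsto (fun i => Jd S a lam R p (w i) (v i)) l (nhds 0)) :
    Tendsto (fun i => dualNorm S a lam R p (w i)) l (nhds 0) := by
  choose v hv hv1 hle using fun i =>
    exists_dualNorm_le_two_mul (S := S) (a := a) (lam := lam) (R := R) (p := p) (w i)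
  refine squeeze_zero (fun i => dualNorm_nonneg _) hle ?_
  simpa only [abs_zero, mul_zero] using (h v hv hv1).abs.const_mul 2

lemma Jd_eq_zero_of_tendsto_dualNorm [l.NeBot] (hV : ∀ x, 0 ≤ lam * a x)
    (hR : IsHLSKernel r p (offDiag R)) (hp : 1 < p) (hu : MemE S a lam u)
    (hw : EnergyBounded S a lam w) (hlim : ∀ x, Tendsto (fun i => w i x) l (nhds 0))
    (hdual : Tendsto (fun i => dualNorm S a lam R p (u + w i)) l (nhds 0)) {v : G → ℝ}
    (hv : MemE S a lam v) : Jd S a lam R p u v = 0 := by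
  have hU := tendsto_Jd_of_tendsto_dualNorm hV hR hp (fun i => hu.add (hw.summable i) hV)
    (fun _ => hv) (fun _ => le_rfl) hdual
  have hconst := (hU.sub (tendsto_Jd_split hV hR hp hu hw hlim hv.energyBounded)).sub
    (tendsto_Jd_zero hV hR hp hw hlim hv)
  simp only [sub_zero] at hconst
  exact tendsto_nhds_unique (tendsto_const_nhds.congr fun i => by ring) hconst

lemma tendsto_dualNorm_of_add [l.NeBot] (hV : ∀ x, 0 ≤ lam * a x)
    (hR : IsHLSKernel r p (offDiag R)) (hp : 1 < p) (hu : MemE S a lam u)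
    (hw : EnergyBounded S a lam w) (hlim : ∀ x, Tendsto (fun i => w i x) l (nhds 0))
    (hdual : Tendsto (fun i => dualNorm S a lam R p (u + w i)) l (nhds 0)) :
    Tendsto (fun i => dualNorm S a lam R p (w i)) l (nhds 0) := by
  refine tendsto_dualNorm_zero fun v hv hv1 => ?_
  have hU := tendsto_Jd_of_tendsto_dualNorm hV hR hp (fun i => hu.add (hw.summable i) hV) hv
    (fun i => Real.sqrt_le_one.2 (hv1 i)) hdual
  have hsplit := tendsto_Jd_split hV hR hp hu hw hlim (energyBounded_of_normEsq_le hV hv hv1)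
  simpa only [Jd_eq_zero_of_tendsto_dualNorm hV hR hp hu hw hlim hdual (hv _), sub_zero,
    sub_sub_cancel] using hU.sub hsplit

end Variational

section RieszKernels

variable {G : Type*} [Group G] {S : Finset G} {N : ℕ}

lemma wordDist_eq_wordDist_one (x y : G) : wordDist S x y = wordDist S (y⁻¹ * x) 1 := by
  simp only [wordDist, mul_inv_rev, inv_inv, mul_one]

lemma exists_ball_card_le (hg : PolyGrowth S N) :
    ∃ C, 0 ≤ C ∧ ∀ (t : Finset G) (ρ : ℝ), 1 ≤ ρ → (t : Set G) ⊆ ball S 1 ρ →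
      (t.card : ℝ) ≤ C * ρ ^ N := by
  obtain ⟨C₁, C₂, hC₁, hC₂, hball⟩ := hg
  refine ⟨C₂, hC₂.le, fun t ρ hρ ht => le_trans ?_ (hball ρ hρ).2⟩
  have hpos : (0 : ℝ) < (ball S (1 : G) ρ).ncard :=
    (by positivity : 0 < C₁ * ρ ^ N).trans_le (hball ρ hρ).1
  have hfin : (ball S (1 : G) ρ).Finite := Set.finite_of_ncard_pos (by exact_mod_cast hpos)
  exact_mod_cast (Set.ncard_coe_finset t).symm.trans_le (Set.ncard_le_ncard ht hfin)

lemma sum_dyadic_shell_le {α : Type*} {d : α → ℕ} {C β : ℝ} (hβ : 0 < β)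
    (hd : ∀ (t : Finset α) (ρ : ℝ), 1 ≤ ρ → (∀ z ∈ t, (d z : ℝ) ≤ ρ) → (t.card : ℝ) ≤ C * ρ ^ N)
    (t : Finset α) (j : ℕ) :
    ∑ z ∈ t with Nat.log 2 (d z) = j, (d z : ℝ) ^ (-β) ≤
      C * 2 ^ N * ((2 : ℝ) ^ ((N : ℝ) - β)) ^ j := by
  have hterm (z : α) (hz : z ∈ t.filter fun z => Nat.log 2 (d z) = j) :
      (d z : ℝ) ^ (-β) ≤ ((2 : ℝ) ^ j) ^ (-β) := by
    obtain h0 | h0 := eq_or_ne (d z) 0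
    · rw [h0, Nat.cast_zero, Real.zero_rpow (neg_ne_zero.2 hβ.ne')]
      positivity
    · have hpow : 2 ^ j ≤ d z := (Finset.mem_filter.1 hz).2 ▸ Nat.pow_log_le_self 2 h0
      exact Real.rpow_le_rpow_of_nonpos (by positivity) (by exact_mod_cast hpow) (by linarith)
  have hcard := hd (t.filter fun z => Nat.log 2 (d z) = j) (2 ^ (j + 1))
    (one_le_pow₀ one_le_two) fun z hz => by
      have hlt := Nat.lt_pow_succ_log_self one_lt_two (d z)
      rw [(Finset.mem_filter.1 hz).2] at hlt
      exact_mod_cast hlt.le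
  calc ∑ z ∈ t with Nat.log 2 (d z) = j, (d z : ℝ) ^ (-β)
      ≤ (t.filter fun z => Nat.log 2 (d z) = j).card * ((2 : ℝ) ^ j) ^ (-β) :=
        (Finset.sum_le_card_nsmul _ _ _ hterm).trans_eq (nsmul_eq_mul _ _)
    _ ≤ C * (2 ^ (j + 1)) ^ N * ((2 : ℝ) ^ j) ^ (-β) := by gcongr
    _ = C * 2 ^ N * (((2 : ℝ) ^ j) ^ (N : ℝ) * ((2 : ℝ) ^ j) ^ (-β)) := by
        rw [pow_succ, mul_pow, Real.rpow_natCast]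
        ring
    _ = C * 2 ^ N * ((2 : ℝ) ^ ((N : ℝ) - β)) ^ j := by
        rw [← Real.rpow_add (by positivity), ← sub_eq_add_neg, Real.rpow_pow_comm two_pos.le]

lemma summable_rpow_of_card_le {α : Type*} {d : α → ℕ} {C β : ℝ} (hC : 0 ≤ C)
    (hβ : (N : ℝ) < β)
    (hd : ∀ (t : Finset α) (ρ : ℝ), 1 ≤ ρ → (∀ z ∈ t, (d z : ℝ) ≤ ρ) → (t.card : ℝ) ≤ C * ρ ^ N) :
    Summable fun z => (d z : ℝ) ^ (-β) := by
  have hβ0 : 0 < β := N.cast_nonneg.trans_lt hβ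
  have hgeom : Summable fun j : ℕ => C * 2 ^ N * ((2 : ℝ) ^ ((N : ℝ) - β)) ^ j :=
    (summable_geometric_of_lt_one (by positivity)
      (Real.rpow_lt_one_of_one_lt_of_neg one_lt_two (sub_neg.2 hβ))).mul_left _
  refine summable_of_sum_le (c := ∑' j : ℕ, C * 2 ^ N * ((2 : ℝ) ^ ((N : ℝ) - β)) ^ j)
    (fun z => by positivity) fun t => ?_
  calc ∑ z ∈ t, (d z : ℝ) ^ (-β)
      = ∑ j ∈ t.image fun z => Nat.log 2 (d z),
          ∑ z ∈ t with Nat.log 2 (d z) = j, (d z : ℝ) ^ (-β) :=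
        (Finset.sum_fiberwise_of_maps_to (fun z hz => Finset.mem_image_of_mem _ hz) _).symm
    _ ≤ ∑ j ∈ t.image fun z => Nat.log 2 (d z), C * 2 ^ N * ((2 : ℝ) ^ ((N : ℝ) - β)) ^ j :=
        Finset.sum_le_sum fun j _ => sum_dyadic_shell_le hβ0 hd t j
    _ ≤ _ := hgeom.sum_le_tsum _ fun j _ => by positivity

lemma summable_wordDist_rpow (hg : PolyGrowth S N) {β : ℝ} (hβ : (N : ℝ) < β) :
    Summable fun z : G => (wordDist S z 1 : ℝ) ^ (-β) := by
  obtain ⟨C, hC, hcard⟩ := exists_ball_card_le hg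
  exact summable_rpow_of_card_le hC hβ fun t ρ hρ ht => hcard t ρ hρ ht

lemma one_lt_of_add_div_lt {α q : ℝ} (hN : 0 < N) (hα : 0 < α) (hq : ((N : ℝ) + α) / N < q) :
    1 < q :=
  ((one_lt_div (by exact_mod_cast hN)).2 (lt_add_of_pos_right (N : ℝ) hα)).trans hq

lemma exists_integrability_exponent {α p : ℝ} (hN : 0 < N) (hα : 0 < α) (hαN : α < N)
    (hp : ((N : ℝ) + α) / N < p) :
    ∃ r, 1 ≤ r ∧ 2 - r⁻¹ ≤ p ∧ (N : ℝ) < (N - α) * r := by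
  have hN0 : (0 : ℝ) < N := by exact_mod_cast hN
  have hlt : ((N : ℝ) + α) / N < min p 2 :=
    lt_min hp ((div_lt_iff₀ hN0).2 (by linarith))
  obtain ⟨θ, hθ, hθp⟩ := exists_between hlt
  have hθ1 : 1 < θ := one_lt_of_add_div_lt hN hα hθ
  have hθ2 : 0 < 2 - θ := sub_pos.2 (hθp.trans_le (min_le_right _ _))
  refine ⟨(2 - θ)⁻¹, (one_le_inv₀ hθ2).2 (by linarith), ?_, ?_⟩
  · rw [inv_inv, sub_sub_cancel]
    exact (hθp.trans_le (min_le_left _ _)).le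
  · rw [← div_eq_mul_inv, lt_div_iff₀ hθ2]
    linarith [(div_lt_iff₀ hN0).1 hθ]

lemma RieszKernel.exists_isHLSKernel [DecidableEq G] {α p : ℝ} {R : G → G → ℝ}
    (hR : RieszKernel S N α R) (hg : PolyGrowth S N) (hN : 0 < N) (hα : 0 < α) (hαN : α < N)
    (hp : ((N : ℝ) + α) / N < p) : ∃ r, IsHLSKernel r p (offDiag R) := by
  obtain ⟨hpos, c₁, c₂, -, hc₂, hbound⟩ := hR
  obtain ⟨r, hr1, hrp, hrN⟩ := exists_integrability_exponent hN hα hαN hp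
  set k : G → ℝ := fun z => c₂ ^ r * (wordDist S z 1 : ℝ) ^ (-((N - α) * r)) with hk
  have hk1 {ι : Type _} : L1Bounded fun _ : ι => k :=
    .of_summable ((summable_wordDist_rpow hg hrN).mul_left _)
  have hnonneg (x y : G) : 0 ≤ offDiag R x y := by
    rw [offDiag]
    split_ifs
    exacts [le_rfl, (hpos x y).le]
  have hle (x y : G) : |offDiag R x y ^ r| ≤ |k (y⁻¹ * x)| := by
    have hk0 : 0 ≤ k (y⁻¹ * x) := by positivity
    rw [abs_of_nonneg (Real.rpow_nonneg (hnonneg x y) r), abs_of_nonneg hk0]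
    obtain rfl | hxy := eq_or_ne y x
    · rwa [offDiag, if_pos rfl, Real.zero_rpow (by positivity)]
    · calc offDiag R x y ^ r ≤ (c₂ * (wordDist S x y : ℝ) ^ (α - N)) ^ r := by
            rw [offDiag, if_neg hxy]
            exact Real.rpow_le_rpow (hpos x y).le (hbound x y hxy.symm).2 (by positivity)
        _ = k (y⁻¹ * x) := by
            rw [hk, wordDist_eq_wordDist_one, Real.mul_rpow hc₂.le (by positivity),
              ← Real.rpow_mul (by positivity), ← neg_mul, neg_sub]
  exact ⟨r, hr1, hrp, hnonneg,
    (hk1.comp_injective (e := fun x y => y⁻¹ * x) fun x y y' h => by simpa using h).mono hle,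
    (hk1.comp_injective (e := fun y x => y⁻¹ * x) fun y x x' h => by simpa using h).mono
      fun y x => hle x y⟩

end RieszKernels

theorem PS_splitting_general {G : Type*} [Group G] [Countable G] [DecidableEq G] {S : Finset G}
    {a : G → ℝ} {lam r p : ℝ} {R : G → G → ℝ} (hV : ∀ x, 0 ≤ lam * a x)
    (hR : IsHLSKernel r p (offDiag R)) (hp : 1 < p) {c : ℝ} {U : ℕ → G → ℝ}
    (hU : PSseq S a lam R p c U) :
    ∃ φ : ℕ → ℕ, StrictMono φ ∧ ∃ u : G → ℝ, MemE S a lam u ∧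
      (∀ x, Tendsto (fun n => U (φ n) x) atTop (nhds (u x))) ∧
      Tendsto (fun n => Jfun S a lam R p (U (φ n) - u)) atTop
        (nhds (c - Jfun S a lam R p u)) ∧
      Tendsto (fun n => dualNorm S a lam R p (U (φ n) - u)) atTop (nhds 0) := by
  obtain ⟨hmem, hJ, hdual⟩ := hU
  obtain ⟨A, hA⟩ := hJ.bddAbove_range
  obtain ⟨B, hB⟩ := hdual.bddAbove_range
  obtain ⟨C, hC⟩ := exists_normEsq_le hV hR hp hmem (fun n => hA ⟨n, rfl⟩) fun n => hB ⟨n, rfl⟩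
  obtain ⟨φ, hφ, u, hlim⟩ := exists_subseq_tendsto_pointwise fun n x =>
    Real.abs_le_sqrt (((hmem n).sq_le_normEsq hV x).trans (hC n))
  have hUφ : EnergyBounded S a lam fun n => U (φ n) :=
    energyBounded_of_normEsq_le hV (fun n => hmem (φ n)) fun n => hC (φ n)
  have hu := hUφ.memE_of_tendsto hlim
  have hw := hUφ.sub hu.energyBounded hV
  have hwlim (x : G) : Tendsto (fun n => (U (φ n) - u) x) atTop (nhds 0) := by
    simpa only [Pi.sub_apply, sub_self] using (hlim x).sub_const (u x)
  have hUw (n : ℕ) : u + (U (φ n) - u) = U (φ n) := add_sub_cancel _ _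
  have hJsplit := tendsto_Jfun_split hV hR hp hu hw hwlim
  refine ⟨φ, hφ, u, hu, hlim, ?_, ?_⟩
  · have hlimJ := ((hJ.comp hφ.tendsto_atTop).sub_const (Jfun S a lam R p u)).sub hJsplit
    simpa only [hUw, Function.comp_apply, sub_zero, sub_sub_cancel] using hlimJ
  · refine tendsto_dualNorm_of_add hV hR hp hu hw hwlim ?_
    simpa only [hUw] using! hdual.comp hφ.tendsto_atTop

theorem PS_splitting
    {G : Type*} [Group G] [Countable G] [DecidableEq G]
    (S : Finset G) (hSsymm : ∀ s ∈ S, s⁻¹ ∈ S)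
    (hSgen : Subgroup.closure (S : Set G) = ⊤)
    (N : ℕ) (hN : 2 ≤ N) (hgrowth : PolyGrowth S N)
    (α : ℝ) (hα0 : 0 < α) (hαN : α < (N : ℝ))
    (R : G → G → ℝ) (hR : RieszKernel S N α R)
    (p : ℝ) (hp : ((N : ℝ) + α) / (N : ℝ) < p)
    (a : G → ℝ) (ha : ∀ x, 0 ≤ a x)
    (lam : ℝ) (hlam : 0 < lam)
    (c : ℝ) (U : ℕ → G → ℝ) (hU : PSseq S a lam R p c U) :
    ∃ φ : ℕ → ℕ, StrictMono φ ∧ ∃ u : G → ℝ, MemE S a lam u ∧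
      (∀ x, Tendsto (fun n => U (φ n) x) atTop (nhds (u x))) ∧
      Tendsto (fun n => Jfun S a lam R p (U (φ n) - u)) atTop
        (nhds (c - Jfun S a lam R p u)) ∧
      Tendsto (fun n => dualNorm S a lam R p (U (φ n) - u)) atTop (nhds 0) := by
  obtain ⟨r, hQ⟩ := hR.exists_isHLSKernel hgrowth (by positivity) hα0 hαN hp
  exact PS_splitting_general (fun x => mul_nonneg hlam.le (ha x)) hQ
    (one_lt_of_add_div_lt (by positivity) hα0 hp) hU

end Choquard
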